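/- (Bessis) Let W be a finite Coxeter group and γ ∈ W a Coxeter element. Then the poset group Γ(W,γ) is isomorphic (as a group) to the Artin group A(W,S) associated to the Coxeter system (W,S). -/

import Mathlib

/-!
Bessis' theorem is proved by building mutually inverse homomorphisms between the poset group and
the Artin group, first for `γ = s_1 ⋯ s_n` the product of the simple reflections in the order given
by a list `l`. A general Coxeter element is `v (s_1 ⋯ s_n) v⁻¹`, and conjugating the Coxeter system
by `v` changes neither the set of reflections nor the poset group (`posetGroup_congr`).

*From the Artin group to the poset group.* If `s_i` precedes `s_j` in `l`, then `s_i s_j ≤ γ`, and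
the relations of the rank two interval `[1, s_i s_j]` imply the braid relation between `⟨s_i⟩` and
`⟨s_j⟩` (`ggen_braid`). This gives `ψ : A → Γ`. It is onto: every positive root is reached from a
simple one by rotating the word `l` and reflecting the root at the same time, since otherwise its
orbit under the Coxeter element would consist of positive roots and have a nonzero sum fixed by the
Coxeter element (`hit_of_root`); each step of this process is a rank two relation in the poset
group (`ggen_mem_of_hit`).

*From the poset group to the Artin group.* By Matsumoto's theorem each `w : W` has a positive lift
`λ(w)` in the Artin group. More generally, `λ(tu) λ(u)⁻¹` is a lift of `t` which depends only on the
side of the chamber of `u` with respect to the walls inverted by `t` (`lam_mul_lam_inv_congr`).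
For a reflection `t` with root `β`, the chamber is chosen according to the sign of `ω_l(·, β)`, where
`ω_l` is the alternating form obtained from the invariant symmetric form and the ordering `l`. The
resulting lift `φ_l(t)` satisfies three properties: `φ_l(s)` is the standard generator for `s`
simple; `φ_l` restricts to standard parabolic subgroups (`phi_cons`); and rotating `l` conjugates
`φ_l` by a standard generator (`phi_rotate`). By induction on the rank, these imply that for *every*
minimal factorization of `γ` into reflections `t_1 ⋯ t_n`, the product `φ_l(t_1) ⋯ φ_l(t_n)` is the
product of the standard generators in the order `l` (`prod_phi`): rotating until the first factor
is the first simple reflection of the word, the other factors lie in a parabolic subgroup of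
smaller rank, by a dimension count on moved spaces (`supp_of_prod_eq`). Hence the product of the
lifts along a reduced factorization of `w ∈ [1, γ]` depends only on `w` (`prod_phi_congr`), which
defines `θ : Γ → A` with `θ ψ = id`. So `ψ` is bijective (`iso_of_wordProd`).
-/

variable {B : Type*} {W : Type*} [Group W] {M : CoxeterMatrix B}

/-- The reflection length of `w`: the least `k` such that `w` is a product of `k`
reflections (conjugates of simple reflections). -/
noncomputable def rlen (cs : CoxeterSystem M W) (w : W) : ℕ :=
  sInf {k | ∃ l : List W, (∀ t ∈ l, cs.IsReflection t) ∧ l.length = k ∧ l.prod = w}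

/-- The reflection (absolute) order on `W`: `u ≤ w` iff `ℓ(w) = ℓ(u) + ℓ(u⁻¹w)`. -/
def rle (cs : CoxeterSystem M W) (u w : W) : Prop :=
  rlen cs w = rlen cs u + rlen cs (u⁻¹ * w)

/-- A Coxeter element: a conjugate of a product of all the simple reflections,
each occurring exactly once, in some order. -/
def IsCoxeterElement [Fintype B] (cs : CoxeterSystem M W) (γ : W) : Prop :=
  ∃ (v : W) (l : List B), l.Nodup ∧ (∀ i : B, i ∈ l) ∧ γ = v * cs.wordProd l * v⁻¹

/-- The generating set of the poset group/monoid: the interval `[1,γ]` minus the identity. -/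
abbrev NCGen (cs : CoxeterSystem M W) (γ : W) : Type _ :=
  {w : W // w ≠ 1 ∧ rle cs w γ}

/-- The defining relations of the positive monoid `Γ₊(W,γ)`:
`⟨w₁⟩⟨w₂⟩ = ⟨w₃⟩` whenever `w₁w₂ = w₃` in `W` and `ℓ(w₁) + ℓ(w₂) = ℓ(w₃)`. -/
def posRels (cs : CoxeterSystem M W) (γ : W) :
    FreeMonoid (NCGen cs γ) → FreeMonoid (NCGen cs γ) → Prop :=
  fun x y => ∃ w₁ w₂ w₃ : NCGen cs γ,
    x = FreeMonoid.of w₁ * FreeMonoid.of w₂ ∧ y = FreeMonoid.of w₃ ∧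
    (w₁ : W) * (w₂ : W) = (w₃ : W) ∧
    rlen cs (w₁ : W) + rlen cs (w₂ : W) = rlen cs (w₃ : W)

/-- The positive monoid `Γ₊(W,γ)`, presented by the generators `⟨w⟩`, `w ∈ [1,γ] \ {1}`,
and the relations `posRels`. -/
abbrev PosMonoid (cs : CoxeterSystem M W) (γ : W) := PresentedMonoid (posRels cs γ)

open Classical in
/-- The generator `⟨w⟩` of `Γ₊(W,γ)` for `w ∈ [1,γ]`, interpreting `⟨1⟩` as the
identity of the monoid (and defaulting to the identity off the interval). -/
noncomputable def pgen (cs : CoxeterSystem M W) (γ : W) (w : W) : PosMonoid cs γ :=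
  if h : w ≠ 1 ∧ rle cs w γ then PresentedMonoid.of (posRels cs γ) ⟨w, h⟩ else 1

/-- The defining relations of the poset group `Γ(W,γ)`:
`⟨w₁⟩⟨w₂⟩ = ⟨w₃⟩` whenever `w₁w₂ = w₃` in `W` and `ℓ(w₁) + ℓ(w₂) = ℓ(w₃)`. -/
def posetGroupRels (cs : CoxeterSystem M W) (γ : W) : Set (FreeGroup (NCGen cs γ)) :=
  {x | ∃ w₁ w₂ w₃ : NCGen cs γ,
    x = FreeGroup.of w₁ * FreeGroup.of w₂ * (FreeGroup.of w₃)⁻¹ ∧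
    (w₁ : W) * (w₂ : W) = (w₃ : W) ∧
    rlen cs (w₁ : W) + rlen cs (w₂ : W) = rlen cs (w₃ : W)}

/-- The poset group `Γ(W,γ)`, presented by the generators `⟨w⟩`, `w ∈ [1,γ] \ {1}`,
and the relations `posetGroupRels`. -/
abbrev PosetGroup (cs : CoxeterSystem M W) (γ : W) := PresentedGroup (posetGroupRels cs γ)

/-- The canonical monoid homomorphism `Γ₊(W,γ) → Γ(W,γ)`, induced by sending each
generator `⟨w⟩` of the monoid presentation to the corresponding group generator. -/
def canHom (cs : CoxeterSystem M W) (γ : W) : PosMonoid cs γ →* PosetGroup cs γ :=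
  PresentedMonoid.lift (fun x => PresentedGroup.of (rels := posetGroupRels cs γ) x) (by
    intro a b hab
    obtain ⟨w₁, w₂, w₃, ha, hb, hmul, hlen⟩ := hab
    subst ha hb
    have hmem : FreeGroup.of w₁ * FreeGroup.of w₂ * (FreeGroup.of w₃)⁻¹ ∈
        posetGroupRels cs γ := ⟨w₁, w₂, w₃, rfl, hmul, hlen⟩
    have h1 : (PresentedGroup.of (rels := posetGroupRels cs γ) w₁) *
        PresentedGroup.of w₂ * (PresentedGroup.of w₃)⁻¹ = 1 :=
      (QuotientGroup.eq_one_iff _).mpr (Subgroup.subset_normalClosure hmem)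
    have h2 : (PresentedGroup.of (rels := posetGroupRels cs γ) w₁) *
        PresentedGroup.of w₂ = PresentedGroup.of w₃ := mul_inv_eq_one.mp h1
    simpa using h2)

/-- The braid relations of the Artin group of the Coxeter matrix `M`: for each pair
`i ≠ j` with `M i j < ∞` (finiteness is encoded by `M i j ≠ 0`), the two alternating
products `sts⋯` and `tst⋯` of `M i j` letters are equal. -/
def artinRels (M : CoxeterMatrix B) : Set (FreeGroup B) :=
  {x | ∃ i j : B, i ≠ j ∧ M i j ≠ 0 ∧
    x = ((CoxeterSystem.alternatingWord i j (M i j)).map FreeGroup.of).prod *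
        (((CoxeterSystem.alternatingWord j i (M i j)).map FreeGroup.of).prod)⁻¹}

/-- The Artin group associated to the Coxeter matrix `M`. -/
abbrev ArtinGroup (M : CoxeterMatrix B) := PresentedGroup (artinRels M)

set_option linter.unusedSectionVars false

namespace DualBraid

open CoxeterSystem

section Geometric

/-! ### The geometric representation -/

/-- The Gram matrix entry `-cos (π / m)` of the geometric representation. For `M i j = 0`
(i.e. `m = ∞`), the convention `π / 0 = 0` yields the customary value `-1`. -/
noncomputable def gram (M : CoxeterMatrix B) (i j : B) : ℝ := -Real.cos (Real.pi / M i j)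

lemma gram_symm (i j : B) : gram M i j = gram M j i := by
  simp [gram, M.symmetric i j]

lemma gram_self (i : B) : gram M i i = 1 := by simp [gram]

lemma gram_nonpos {i j : B} (h : i ≠ j) : gram M i j ≤ 0 := by
  have h1 := M.off_diagonal i j h
  rw [gram, neg_nonpos]
  rcases Nat.eq_zero_or_pos (M i j) with h0 | h0
  · simp [h0]
  · have h2 : (2 : ℝ) ≤ M i j := by
      have : 2 ≤ M i j := by omega
      exact_mod_cast this
    apply Real.cos_nonneg_of_mem_Icc
    have hpi := Real.pi_pos
    constructor
    · have : 0 ≤ Real.pi / M i j := by positivity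
      linarith
    · exact div_le_div_of_nonneg_left hpi.le (by norm_num) h2

variable [Fintype B] [DecidableEq B]

/-- The invariant symmetric bilinear form of the geometric representation. -/
noncomputable def bil (M : CoxeterMatrix B) : LinearMap.BilinForm ℝ (B → ℝ) :=
  Matrix.toBilin' (Matrix.of (gram M))

/-- The simple root `α_i`, as a coordinate vector. -/
def sroot (i : B) : B → ℝ := Pi.single i 1

@[simp] lemma sroot_self (i : B) : sroot i i = 1 := by simp [sroot]

lemma sroot_ne {i j : B} (h : j ≠ i) : sroot i j = 0 := by simp [sroot, h]

lemma sroot_nonneg (i : B) : 0 ≤ sroot i := by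
  intro j; by_cases h : j = i
  · subst h; simp
  · simp [sroot_ne h]

lemma sroot_injective : Function.Injective (sroot : B → B → ℝ) := by
  intro i j h
  by_contra hne
  have := congrFun h i
  rw [sroot_self, sroot_ne hne] at this
  norm_num at this

lemma bil_sroot_sroot (i j : B) : bil M (sroot i) (sroot j) = gram M i j := by
  simp [bil, sroot]

lemma bil_sroot (i : B) (x : B → ℝ) : bil M (sroot i) x = ∑ j, gram M i j * x j := by
  simp [bil, sroot, Matrix.toBilin'_apply', Matrix.mulVec, dotProduct, Pi.single_apply]

lemma bil_symm (x y : B → ℝ) : bil M x y = bil M y x := by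
  simp only [bil, Matrix.toBilin'_apply, Matrix.of_apply]
  rw [Finset.sum_comm]
  refine Finset.sum_congr rfl fun i _ => Finset.sum_congr rfl fun j _ => ?_
  rw [gram_symm]; ring

/-- The simple reflection `x ↦ x - 2⟨α_i, x⟩ α_i`. -/
noncomputable def srefl (M : CoxeterMatrix B) (i : B) : Module.End ℝ (B → ℝ) :=
  LinearMap.id - ((2 : ℝ) • bil M (sroot i)).smulRight (sroot i)

lemma srefl_apply (i : B) (x : B → ℝ) :
    srefl M i x = x - (2 * bil M (sroot i) x) • sroot i := by
  simp [srefl]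

lemma srefl_invol (i : B) (x : B → ℝ) : srefl M i (srefl M i x) = x := by
  simp only [srefl_apply, map_sub, map_smul, bil_sroot_sroot, gram_self]
  module

lemma srefl_sroot (i j : B) : srefl M i (sroot j) = sroot j - (2 * gram M i j) • sroot i := by
  rw [srefl_apply, bil_sroot_sroot]

/-- In the rank two case of finite order, both coordinates of the rotation `s_i s_j` on the plane
spanned by `α_i, α_j` are given by sines of multiples of `π / m`. -/
lemma srefl_pow_sroot {i j : B} (k : ℕ) :
    Real.sin (Real.pi / M i j) • ((srefl M i * srefl M j) ^ k) (sroot i) =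
        Real.sin ((2 * k + 1) * (Real.pi / M i j)) • sroot i +
        Real.sin (2 * k * (Real.pi / M i j)) • sroot j ∧
      Real.sin (Real.pi / M i j) • ((srefl M i * srefl M j) ^ k) (sroot j) =
        - Real.sin (2 * k * (Real.pi / M i j)) • sroot i -
        Real.sin ((2 * k - 1) * (Real.pi / M i j)) • sroot j := by
  have hg : gram M i j = - Real.cos (Real.pi / M i j) := rfl
  have hg' : gram M j i = - Real.cos (Real.pi / M i j) := by rw [gram_symm]; rfl
  set θ := Real.pi / M i j
  have e1 : ∀ k : ℝ, Real.sin ((k + 2) * θ) =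
      2 * Real.cos θ * Real.sin ((k + 1) * θ) - Real.sin (k * θ) := by
    intro k
    have h1 : (k + 2) * θ = (k + 1) * θ + θ := by ring
    have h2 : k * θ = (k + 1) * θ - θ := by ring
    rw [h1, h2, Real.sin_add, Real.sin_sub]; ring
  induction k with
  | zero => constructor <;> simp
  | succ k ih =>
    obtain ⟨ih1, ih2⟩ := ih
    have a0 := e1 (2 * k - 1)
    have a1 := e1 (2 * k)
    have a2 := e1 (2 * k + 1)
    rw [show (2 * (k : ℝ) - 1 + 2) = 2 * k + 1 by ring,
      show (2 * (k : ℝ) - 1 + 1) = 2 * k by ring] at a0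
    rw [show (2 * (k : ℝ) + 1 + 2) = 2 * k + 3 by ring,
      show (2 * (k : ℝ) + 1 + 1) = 2 * k + 2 by ring] at a2
    push_cast
    rw [show (2 * ((k : ℝ) + 1) + 1) = 2 * k + 3 by ring,
      show (2 * ((k : ℝ) + 1) - 1) = 2 * k + 1 by ring,
      show (2 * ((k : ℝ) + 1)) = 2 * k + 2 by ring]
    constructor
    · rw [pow_succ', Module.End.mul_apply, ← map_smul, ih1]
      simp only [Module.End.mul_apply, map_add, map_smul, srefl_sroot, map_sub, gram_self, hg, hg']
      rw [a2, a1]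
      module
    · rw [pow_succ', Module.End.mul_apply, ← map_smul, ih2]
      simp only [Module.End.mul_apply, map_neg, map_sub, map_smul, srefl_sroot, gram_self, hg, hg',
        neg_smul]
      rw [a1, a0]
      module

lemma srefl_liftable : M.IsLiftable (srefl M) := by
  intro i j
  by_cases hij : i = j
  · subst hij
    rw [M.diagonal, pow_one]
    ext1 x
    ext1
    simp [srefl_invol]
  rcases Nat.eq_zero_or_pos (M i j) with h0 | h0
  · simp [h0]
  have h1 := M.off_diagonal i j hij
  have h2 : (2 : ℝ) ≤ M i j := by
    have : 2 ≤ M i j := by omega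
    exact_mod_cast this
  have hg : gram M i j = - Real.cos (Real.pi / M i j) := rfl
  have hg' : gram M j i = - Real.cos (Real.pi / M i j) := by rw [gram_symm]; rfl
  obtain ⟨p1, p2⟩ := srefl_pow_sroot (M := M) (i := i) (j := j) (M i j)
  set m : ℝ := (M i j : ℝ) with hm
  have hm0 : m ≠ 0 := by linarith
  have hs : 0 < Real.sin (Real.pi / m) := by
    apply Real.sin_pos_of_pos_of_lt_pi
    · have := Real.pi_pos; positivity
    · exact div_lt_self Real.pi_pos (by linarith)
  set θ := Real.pi / m with hθ
  have hmθ : 2 * m * θ = 2 * Real.pi := by rw [hθ]; field_simp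
  rw [add_mul, hmθ, one_mul, add_comm (2 * Real.pi), Real.sin_add_two_pi, Real.sin_two_pi] at p1
  rw [sub_mul, hmθ, one_mul, Real.sin_two_pi_sub, Real.sin_two_pi] at p2
  have q1 : ((srefl M i * srefl M j) ^ M i j) (sroot i) = sroot i := by
    apply smul_right_injective _ hs.ne'
    simpa using p1
  have q2 : ((srefl M i * srefl M j) ^ M i j) (sroot j) = sroot j := by
    apply smul_right_injective _ hs.ne'
    simpa using p2
  apply LinearMap.ext
  intro z
  -- `z` splits as a combination of `α_i, α_j` plus a vector orthogonal to both.
  have hc : Real.sin θ ^ 2 = 1 - Real.cos θ ^ 2 := Real.sin_sq θ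
  obtain ⟨p, q, h3, h4⟩ : ∃ p q : ℝ, bil M (sroot i) (z - p • sroot i - q • sroot j) = 0 ∧
      bil M (sroot j) (z - p • sroot i - q • sroot j) = 0 := by
    refine ⟨(bil M (sroot i) z + Real.cos θ * bil M (sroot j) z) / Real.sin θ ^ 2,
      (bil M (sroot j) z + Real.cos θ * bil M (sroot i) z) / Real.sin θ ^ 2, ?_, ?_⟩
    · simp only [map_sub, map_smul, bil_sroot_sroot, gram_self, hg, smul_eq_mul]
      field_simp
      rw [hc]; ring
    · simp only [map_sub, map_smul, bil_sroot_sroot, gram_self, hg', smul_eq_mul]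
      field_simp
      rw [hc]; ring
  set z0 := z - p • sroot i - q • sroot j with hz0
  have hfix : ∀ k : ℕ, ((srefl M i * srefl M j) ^ k) z0 = z0 := by
    intro k
    induction k with
    | zero => simp
    | succ k ih =>
      rw [pow_succ', Module.End.mul_apply, ih, Module.End.mul_apply, srefl_apply j, h4]
      simp [srefl_apply, h3]
  have hz : z = z0 + p • sroot i + q • sroot j := by rw [hz0]; module
  rw [hz]
  simp only [map_add, map_smul, q1, q2, hfix]
  simp

/-- The geometric representation of the Coxeter group `W` on `B → ℝ`. -/
noncomputable def geom (cs : CoxeterSystem M W) : W →* Module.End ℝ (B → ℝ) :=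
  cs.lift ⟨srefl M, srefl_liftable⟩

variable (cs : CoxeterSystem M W)

@[simp] lemma geom_simple (i : B) : geom cs (cs.simple i) = srefl M i :=
  cs.lift_apply_simple srefl_liftable i

lemma geom_mul_apply (w v : W) (x : B → ℝ) : geom cs (w * v) x = geom cs w (geom cs v x) := by
  rw [map_mul]; rfl

@[simp] lemma geom_one_apply (x : B → ℝ) : geom cs 1 x = x := by simp

@[simp] lemma geom_inv_apply (w : W) (x : B → ℝ) : geom cs w⁻¹ (geom cs w x) = x := by
  rw [← geom_mul_apply]; simp

@[simp] lemma geom_apply_inv (w : W) (x : B → ℝ) : geom cs w (geom cs w⁻¹ x) = x := by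
  rw [← geom_mul_apply]; simp

lemma bil_geom (w : W) : ∀ x y, bil M (geom cs w x) (geom cs w y) = bil M x y := by
  induction w using cs.simple_induction_left with
  | one => simp
  | mul_simple_left w i ih =>
    intro x y
    rw [geom_mul_apply, geom_mul_apply, geom_simple, ← ih x y]
    generalize geom cs w x = x
    generalize geom cs w y = y
    simp only [srefl_apply, map_sub, map_smul, LinearMap.sub_apply, LinearMap.smul_apply,
      bil_sroot_sroot, gram_self, smul_eq_mul]
    rw [bil_symm x (sroot i)]
    ring

/-! ### Positivity of roots -/

/-- The Chebyshev-type sequence giving the coordinates of the rank two roots. -/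
noncomputable def chebSeq (c : ℝ) : ℕ → ℝ
  | 0 => 0
  | 1 => 1
  | (k + 2) => 2 * c * chebSeq c (k + 1) - chebSeq c k

lemma chebSeq_nonneg {i j : B} (hij : i ≠ j) (k : ℕ) (hk : M i j = 0 ∨ k ≤ M i j) :
    0 ≤ chebSeq (Real.cos (Real.pi / M i j)) k := by
  by_cases h0 : M i j = 0
  · have h : ∀ k : ℕ, chebSeq 1 k = k ∧ chebSeq 1 (k + 1) = k + 1 := by
      intro k
      induction k with
      | zero => simp [chebSeq]
      | succ k ih => 
        refine ⟨by rw [ih.2]; push_cast; ring, ?_⟩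
        rw [chebSeq, ih.1, ih.2]; push_cast; ring
    simp [h0, (h k).1]
  · have hk' : k ≤ M i j := by tauto
    have h1 := M.off_diagonal i j hij
    have h2 : (2 : ℝ) ≤ M i j := by
      have : 2 ≤ M i j := by omega
      exact_mod_cast this
    have hkm : (k : ℝ) ≤ M i j := by exact_mod_cast hk'
    set m : ℝ := (M i j : ℝ)
    have hpi := Real.pi_pos
    have hs : 0 < Real.sin (Real.pi / m) := by
      apply Real.sin_pos_of_pos_of_lt_pi
      · positivity
      · exact div_lt_self hpi (by linarith)
    set θ := Real.pi / m with hθ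
    have h : ∀ k : ℕ, chebSeq (Real.cos θ) k * Real.sin θ = Real.sin (k * θ) ∧
        chebSeq (Real.cos θ) (k + 1) * Real.sin θ = Real.sin ((k + 1) * θ) := by
      intro k
      induction k with
      | zero => simp [chebSeq]
      | succ k ih =>
        refine ⟨by rw [ih.2]; push_cast; rfl, ?_⟩
        rw [chebSeq, sub_mul, mul_assoc, ih.1, ih.2]
        push_cast
        rw [show ((k : ℝ) + 1 + 1) * θ = (k + 1) * θ + θ by ring,
          show (k : ℝ) * θ = (k + 1) * θ - θ by ring, Real.sin_add, Real.sin_sub]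
        ring
    have hsin : 0 ≤ Real.sin (k * θ) := by
      apply Real.sin_nonneg_of_nonneg_of_le_pi
      · positivity
      · rw [hθ, mul_div_assoc', div_le_iff₀ (by linarith)]
        nlinarith
    rw [← (h k).1] at hsin
    exact nonneg_of_mul_nonneg_left hsin hs

lemma geom_alternating (i j : B) (k : ℕ) :
    geom cs (cs.wordProd (alternatingWord i j k)) (sroot i) =
      if Even k then chebSeq (Real.cos (Real.pi / M i j)) (k + 1) • sroot i +
          chebSeq (Real.cos (Real.pi / M i j)) k • sroot j
      else chebSeq (Real.cos (Real.pi / M i j)) k • sroot i +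
          chebSeq (Real.cos (Real.pi / M i j)) (k + 1) • sroot j := by
  have hg : gram M i j = - Real.cos (Real.pi / M i j) := rfl
  have hg' : gram M j i = - Real.cos (Real.pi / M i j) := by rw [gram_symm]; rfl
  induction k with
  | zero => simp [alternatingWord, chebSeq]
  | succ k ih =>
    rw [alternatingWord_succ', cs.wordProd_cons, geom_mul_apply, ih, geom_simple, chebSeq]
    by_cases hk : Even k
    · have hk' : ¬ Even (k + 1) := by rwa [Nat.even_add_one, not_not]
      simp only [hk, hk', if_true, if_false, map_add, map_smul, srefl_sroot, gram_self, hg']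
      module
    · have hk' : Even (k + 1) := by rwa [Nat.even_add_one]
      simp only [hk, hk', if_true, if_false, map_add, map_smul, srefl_sroot, gram_self, hg]
      module

lemma geom_alternating_nonneg {i j : B} (hij : i ≠ j) (k : ℕ) (hk : M i j = 0 ∨ k < M i j) :
    ∃ a b : ℝ, 0 ≤ a ∧ 0 ≤ b ∧
      geom cs (cs.wordProd (alternatingWord i j k)) (sroot i) = a • sroot i + b • sroot j := by
  have h1 := chebSeq_nonneg (M := M) hij k (by omega)
  have h2 := chebSeq_nonneg (M := M) hij (k + 1) (by omega)
  rw [geom_alternating]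
  split_ifs
  · exact ⟨_, _, h2, h1, rfl⟩
  · exact ⟨_, _, h1, h2, rfl⟩

/-- Every `w` factors, with additive lengths, as a minimal coset representative for the dihedral
subgroup `⟨s_i, s_j⟩` times an alternating word. -/
lemma exists_dihedral_decomp (i j : B) (w : W) : ∃ (z : W) (k : ℕ) (a b : B),
    (a = i ∧ b = j ∨ a = j ∧ b = i) ∧
    w = z * cs.wordProd (alternatingWord a b k) ∧ cs.length w = cs.length z + k ∧
    cs.length z < cs.length (z * cs.simple i) ∧ cs.length z < cs.length (z * cs.simple j) := by
  induction hn : cs.length w using Nat.strong_induction_on generalizing w with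
  | _ n ih =>
    subst hn
    -- Peeling off a right descent `x ∈ {i, j}` of `w`.
    have key : ∀ x y : B, (x = i ∧ y = j ∨ x = j ∧ y = i) →
        cs.length (w * cs.simple x) < cs.length w → ∃ (z : W) (k : ℕ) (a b : B),
        (a = i ∧ b = j ∨ a = j ∧ b = i) ∧
        w = z * cs.wordProd (alternatingWord a b k) ∧ cs.length w = cs.length z + k ∧
        cs.length z < cs.length (z * cs.simple i) ∧ cs.length z < cs.length (z * cs.simple j) := by
      intro x y hxy hx
      obtain ⟨z, k, a, b, hab, hw, hl, h1, h2⟩ := ih _ hx _ rfl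
      have hlen : cs.length (w * cs.simple x) + 1 = cs.length w := by
        rcases cs.length_mul_simple w x with h | h <;> omega
      have hww : w * cs.simple x * cs.simple x = w := by simp
      have hfin : ∀ y', (x = i ∧ y' = j ∨ x = j ∧ y' = i) →
          w * cs.simple x = z * cs.wordProd (alternatingWord x y' k) → ∃ (z : W) (k : ℕ) (a b : B),
          (a = i ∧ b = j ∨ a = j ∧ b = i) ∧
          w = z * cs.wordProd (alternatingWord a b k) ∧ cs.length w = cs.length z + k ∧
          cs.length z < cs.length (z * cs.simple i) ∧
          cs.length z < cs.length (z * cs.simple j) := by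
        intro y' hy' he
        refine ⟨z, k + 1, y', x, by tauto, ?_, by omega, h1, h2⟩
        rw [alternatingWord_succ, cs.wordProd_concat, ← mul_assoc, ← he]
        simp
      by_cases hbx : b = x
      · cases k with
        | zero =>
          refine hfin y hxy ?_
          rw [hw, alternatingWord, alternatingWord]
        | succ k =>
          exfalso
          subst hbx
          rw [alternatingWord_succ, cs.wordProd_concat, ← mul_assoc] at hw
          have : w = z * cs.wordProd (alternatingWord b a k) := by
            rw [← hww, hw]; simp
          have h3 := cs.length_mul_le z (cs.wordProd (alternatingWord b a k))
          have h4 := cs.length_wordProd_le (alternatingWord b a k)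
          rw [← this] at h3
          simp only [length_alternatingWord] at h4
          omega
      · have hax : a = x := by
          rcases hab with ⟨rfl, rfl⟩ | ⟨rfl, rfl⟩ <;> rcases hxy with ⟨rfl, rfl⟩ | ⟨rfl, rfl⟩ <;>
            simp_all
        subst hax
        exact hfin b hab hw
    by_cases hi : cs.length (w * cs.simple i) < cs.length w
    · exact key i j (by simp) hi
    by_cases hj : cs.length (w * cs.simple j) < cs.length w
    · exact key j i (by simp) hj
    have hi' := cs.length_mul_simple_ne w i
    have hj' := cs.length_mul_simple_ne w j
    exact ⟨w, 0, i, j, by simp, by simp [alternatingWord], by simp, by omega, by omega⟩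

lemma le_of_dihedral_decomp {a b : B} {z : W} {k : ℕ}
    (h : cs.length (z * cs.wordProd (alternatingWord a b k)) = cs.length z + k)
    (hM : M a b ≠ 0) : k ≤ M a b := by
  by_contra hk
  have h1 := cs.length_mul_le z (cs.wordProd (alternatingWord a b k))
  have h2 := cs.not_isReduced_alternatingWord a b hM (by omega : k > M a b)
  have h3 := cs.length_wordProd_le (alternatingWord a b k)
  unfold CoxeterSystem.IsReduced at h2
  rw [length_alternatingWord] at h2 h3
  omega

/-- If `ℓ(w s_i) > ℓ(w)` then the root `w α_i` is positive. -/
theorem geom_sroot_nonneg (w : W) (i : B) (h : cs.length w < cs.length (w * cs.simple i)) :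
    0 ≤ geom cs w (sroot i) := by
  induction hn : cs.length w using Nat.strong_induction_on generalizing w i with
  | _ n ih =>
    subst hn
    by_cases hw : w = 1
    · subst hw; simpa using sroot_nonneg i
    obtain ⟨j, hj⟩ := cs.exists_rightDescent_of_ne_one hw
    unfold CoxeterSystem.IsRightDescent at hj
    have hij : i ≠ j := by rintro rfl; omega
    obtain ⟨z, k, a, b, hab, hwz, hl, hzi, hzj⟩ := exists_dihedral_decomp cs i j w
    have hk0 : k ≠ 0 := by
      rintro rfl
      simp only [alternatingWord, wordProd_nil, mul_one] at hwz
      subst hwz; omega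
    have hb : b = j := by
      rcases hab with ⟨rfl, rfl⟩ | ⟨rfl, rfl⟩
      · rfl
      · exfalso
        obtain ⟨k, rfl⟩ := Nat.exists_eq_succ_of_ne_zero hk0
        rw [Nat.succ_eq_add_one, alternatingWord_succ, cs.wordProd_concat, ← mul_assoc] at hwz
        have h3 := cs.length_mul_le z (cs.wordProd (alternatingWord b a k))
        have h4 := cs.length_wordProd_le (alternatingWord b a k)
        have h5 : w * cs.simple b = z * cs.wordProd (alternatingWord b a k) := by
          rw [hwz]; simp
        rw [← h5] at h3
        simp only [length_alternatingWord] at h4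
        omega
    have ha : a = i := by
      rcases hab with ⟨rfl, rfl⟩ | ⟨rfl, rfl⟩
      · rfl
      · exact absurd hb hij
    subst ha hb
    have hkm : M a b = 0 ∨ k < M a b := by
      by_cases hM : M a b = 0
      · exact Or.inl hM
      right
      -- Lengthening `w` by `s_a` lengthens the alternating word.
      have h6 : w * cs.simple a = z * cs.wordProd (alternatingWord b a (k + 1)) := by
        rw [alternatingWord_succ, cs.wordProd_concat, ← mul_assoc, ← hwz]
      have h7 : cs.length (w * cs.simple a) = cs.length z + (k + 1) := by
        rcases cs.length_mul_simple w a with h | h <;> omega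
      rw [h6] at h7
      have := le_of_dihedral_decomp cs h7 (by rwa [M.symmetric])
      rw [M.symmetric] at this
      omega
    obtain ⟨p, q, hp, hq, he⟩ := geom_alternating_nonneg cs hij k hkm
    have e1 := ih (cs.length z) (by omega) z a hzi rfl
    have e2 := ih (cs.length z) (by omega) z b hzj rfl
    rw [hwz, geom_mul_apply, he, map_add, map_smul, map_smul]
    exact add_nonneg (smul_nonneg hp e1) (smul_nonneg hq e2)

theorem geom_sroot_nonpos (w : W) (i : B) (h : cs.length (w * cs.simple i) < cs.length w) :
    geom cs w (sroot i) ≤ 0 := by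
  have := geom_sroot_nonneg cs (w * cs.simple i) i (by simpa using h)
  rw [geom_mul_apply, geom_simple, srefl_sroot, gram_self] at this
  have h2 : sroot i - (2 * (1 : ℝ)) • sroot i = - sroot i := by module
  rw [h2, map_neg] at this
  exact neg_nonneg.mp this

end Geometric

end DualBraid

namespace DualBraid

open CoxeterSystem

section Roots

variable [Fintype B] [DecidableEq B] (cs : CoxeterSystem M W)

/-! ### Roots -/

/-- The roots are the images of the simple roots under `W`. -/
def IsRoot (β : B → ℝ) : Prop := ∃ w i, β = geom cs w (sroot i)

variable {cs} {β : B → ℝ}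

lemma isRoot_sroot (i : B) : IsRoot cs (sroot i) := ⟨1, i, by simp⟩

lemma IsRoot.bil_self (h : IsRoot cs β) : bil M β β = 1 := by
  obtain ⟨w, i, rfl⟩ := h
  rw [bil_geom, bil_sroot_sroot, gram_self]

lemma IsRoot.ne_zero (h : IsRoot cs β) : β ≠ 0 := by
  rintro rfl
  simpa using h.bil_self

lemma IsRoot.geom (h : IsRoot cs β) (w : W) : IsRoot cs (geom cs w β) := by
  obtain ⟨v, i, rfl⟩ := h
  exact ⟨w * v, i, by rw [geom_mul_apply]⟩

lemma IsRoot.srefl (h : IsRoot cs β) (i : B) : IsRoot cs (srefl M i β) := by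
  rw [← geom_simple cs]; exact h.geom _

lemma srefl_sroot_self (i : B) : srefl M i (sroot i) = - sroot i := by
  rw [srefl_sroot, gram_self]; module

lemma IsRoot.neg (h : IsRoot cs β) : IsRoot cs (-β) := by
  obtain ⟨v, i, rfl⟩ := h
  exact ⟨v * cs.simple i, i, by rw [geom_mul_apply, geom_simple, srefl_sroot_self, map_neg]⟩

lemma IsRoot.nonneg_or_nonpos (h : IsRoot cs β) : 0 ≤ β ∨ β ≤ 0 := by
  obtain ⟨w, i, rfl⟩ := h
  rcases cs.length_mul_simple w i with h | h
  · exact Or.inl (geom_sroot_nonneg cs w i (by omega))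
  · exact Or.inr (geom_sroot_nonpos cs w i (by omega))

lemma IsRoot.not_both (h : IsRoot cs β) (h1 : 0 ≤ β) (h2 : β ≤ 0) : False :=
  h.ne_zero (le_antisymm h2 h1)

lemma IsRoot.not_nonneg_iff (h : IsRoot cs β) : ¬ 0 ≤ β ↔ β ≤ 0 :=
  ⟨fun h1 => h.nonneg_or_nonpos.resolve_left h1, fun h2 h1 => h.not_both h1 h2⟩

lemma IsRoot.not_nonpos_iff (h : IsRoot cs β) : ¬ β ≤ 0 ↔ 0 ≤ β :=
  ⟨fun h1 => h.nonneg_or_nonpos.resolve_right h1, fun h2 h1 => h.not_both h2 h1⟩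

variable (cs) in
lemma finite_roots [Finite W] : {β | IsRoot cs β}.Finite := by
  refine (Set.finite_range (fun p : W × B => geom cs p.1 (sroot p.2))).subset ?_
  rintro _ ⟨w, i, rfl⟩
  exact ⟨(w, i), rfl⟩

variable (cs) in
lemma geom_sroot_nonneg_iff (w : W) (i : B) :
    0 ≤ geom cs w (sroot i) ↔ cs.length w < cs.length (w * cs.simple i) := by
  refine ⟨fun h => ?_, geom_sroot_nonneg cs w i⟩
  by_contra hc
  have := cs.length_mul_simple_ne w i
  exact ((isRoot_sroot i).geom w).not_both h (geom_sroot_nonpos cs w i (by omega))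

variable (cs) in
lemma geom_inv_sroot_nonneg_iff (u : W) (i : B) :
    0 ≤ geom cs u⁻¹ (sroot i) ↔ cs.length u < cs.length (cs.simple i * u) := by
  rw [geom_sroot_nonneg_iff, cs.length_inv, ← cs.length_inv (cs.simple i * u)]
  simp

variable (cs) in
lemma geom_injective : Function.Injective (geom cs) := by
  rw [injective_iff_map_eq_one]
  intro w hw
  by_contra h
  obtain ⟨i, hi⟩ := cs.exists_rightDescent_of_ne_one h
  have h1 := geom_sroot_nonpos cs w i hi
  rw [hw] at h1
  exact (isRoot_sroot (cs := cs) i).not_both (sroot_nonneg i) h1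

lemma eq_smul_sroot {x : B → ℝ} {i : B} (h : ∀ j, j ≠ i → x j = 0) : x = x i • sroot i := by
  ext j
  by_cases hj : j = i
  · subst hj; simp
  · simp [h j hj, sroot_ne hj]

lemma srefl_coord {x : B → ℝ} {i j : B} (h : j ≠ i) : srefl M i x j = x j := by
  simp [srefl_apply, sroot_ne h]

lemma IsRoot.exists_pos (h : IsRoot cs β) (h0 : 0 ≤ β) {i : B} (hne : β ≠ sroot i) :
    ∃ j, j ≠ i ∧ 0 < β j := by
  by_contra! hc
  have h1 : β = β i • sroot i := eq_smul_sroot fun j hj => le_antisymm (hc j hj) (h0 j)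
  have h2 := h.bil_self
  rw [h1] at h2
  simp only [map_smul, LinearMap.smul_apply, bil_sroot_sroot, gram_self, smul_eq_mul] at h2
  have h3 : β i = 1 := by
    have := h0 i
    simp only [Pi.zero_apply] at this
    nlinarith
  rw [h3, one_smul] at h1
  exact hne h1

/-- A simple reflection permutes the positive roots other than its own. -/
lemma IsRoot.srefl_nonneg (h : IsRoot cs β) (h0 : 0 ≤ β) {i : B} (hne : β ≠ sroot i) :
    0 ≤ DualBraid.srefl M i β := by
  obtain ⟨j, hj, hpos⟩ := h.exists_pos h0 hne
  rw [← (h.srefl i).not_nonpos_iff]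
  intro hc
  have := hc j
  rw [srefl_coord hj] at this
  exact absurd this (not_le.mpr hpos)

variable (cs) in
/-- `β` is the positive root of the reflection `t`. -/
def HasRoot (t : W) (β : B → ℝ) : Prop :=
  IsRoot cs β ∧ 0 ≤ β ∧ ∀ x, geom cs t x = x - (2 * bil M β x) • β

lemma hasRoot_simple (i : B) : HasRoot cs (cs.simple i) (sroot i) :=
  ⟨isRoot_sroot i, sroot_nonneg i, fun x => by rw [geom_simple, srefl_apply]⟩

/-- The reflection formula transports along conjugation, up to the sign of the root. -/
lemma geom_conj {t : W} (h : ∀ x, geom cs t x = x - (2 * bil M β x) • β) (w : W) (x : B → ℝ) :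
    geom cs (w * t * w⁻¹) x = x - (2 * bil M (geom cs w β) x) • geom cs w β := by
  rw [geom_mul_apply, geom_mul_apply, h, map_sub, map_smul, geom_apply_inv]
  congr 3
  rw [← bil_geom cs w, geom_apply_inv]

lemma HasRoot.conj {t : W} (h : HasRoot cs t β) (w : W) (hw : 0 ≤ geom cs w β) :
    HasRoot cs (w * t * w⁻¹) (geom cs w β) :=
  ⟨h.1.geom w, hw, geom_conj h.2.2 w⟩

lemma exists_hasRoot {t : W} (ht : cs.IsReflection t) : ∃ β, HasRoot cs t β := by
  obtain ⟨w, i, rfl⟩ := ht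
  have h1 := geom_conj (hasRoot_simple (cs := cs) i).2.2 w
  rcases ((isRoot_sroot (cs := cs) i).geom w).nonneg_or_nonpos with h | h
  · exact ⟨_, (isRoot_sroot i).geom w, h, h1⟩
  · refine ⟨_, ((isRoot_sroot i).geom w).neg, neg_nonneg.mpr h, fun x => ?_⟩
    rw [h1]; simp

lemma HasRoot.geom_self {t : W} (h : HasRoot cs t β) : geom cs t β = -β := by
  rw [h.2.2, h.1.bil_self]; module

lemma HasRoot.unique {t : W} {β' : B → ℝ} (h : HasRoot cs t β) (h' : HasRoot cs t β') :
    β = β' := by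
  have h1 := h'.2.2 β
  rw [h.geom_self] at h1
  set c := bil M β' β
  have h2 : β = c • β' := by
    have h4 : (2 : ℝ) • β = (2 : ℝ) • (c • β') := by
      rw [smul_smul]
      have : (2 * c) • β' = β - -β := by rw [h1]; abel
      rw [this]; module
    exact smul_right_injective _ (two_ne_zero) h4
  have h3 := h.1.bil_self
  rw [h2] at h3
  simp only [map_smul, LinearMap.smul_apply, h'.1.bil_self, smul_eq_mul] at h3
  have h5 : c = 1 ∨ c = -1 := by
    have : (c - 1) * (c + 1) = 0 := by linarith
    rcases mul_eq_zero.mp this with h | h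
    · left; linarith
    · right; linarith
  rcases h5 with h5 | h5
  · rw [h2, h5, one_smul]
  · exfalso
    rw [h5] at h2
    refine h.1.not_both h.2.1 ?_
    rw [h2]
    simpa using h'.2.1

lemma HasRoot.eq_of_root {t t' : W} (h : HasRoot cs t β) (h' : HasRoot cs t' β) : t = t' :=
  geom_injective cs (LinearMap.ext fun x => by rw [h.2.2, h'.2.2])

lemma HasRoot.mul_self {t : W} (h : HasRoot cs t β) : t * t = 1 := by
  apply geom_injective cs
  refine LinearMap.ext fun x => ?_
  simp only [geom_mul_apply, h.2.2, map_sub, map_smul, h.1.bil_self, map_one,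
    Module.End.one_apply, smul_eq_mul]
  module

lemma HasRoot.inv_eq {t : W} (h : HasRoot cs t β) : t⁻¹ = t :=
  inv_eq_of_mul_eq_one_left h.mul_self

/-- Roots sent to negative roots by a reflection pair positively with its root. -/
lemma HasRoot.bil_pos {t : W} (h : HasRoot cs t β) {α : B → ℝ} (hα : IsRoot cs α) (h0 : 0 ≤ α)
    (ht : geom cs t α ≤ 0) : 0 < bil M α β := by
  by_contra hc
  push Not at hc
  refine (hα.geom t).not_both ?_ ht
  rw [h.2.2, bil_symm]
  intro j
  have h1 := h0 j
  have h2 := h.2.1 j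
  simp only [Pi.zero_apply, Pi.sub_apply, Pi.smul_apply, smul_eq_mul] at *
  nlinarith

/-- Roots sent to negative roots by a reflection are supported in the support of its root. -/
lemma HasRoot.coord_zero {t : W} (h : HasRoot cs t β) {α : B → ℝ} (h0 : 0 ≤ α)
    (ht : geom cs t α ≤ 0) {j : B} (hj : β j = 0) : α j = 0 := by
  rw [h.2.2 α] at ht
  have := ht j
  simp only [Pi.zero_apply, Pi.sub_apply, Pi.smul_apply, smul_eq_mul, hj, mul_zero, sub_zero] at this
  exact le_antisymm this (h0 j)

end Roots

end DualBraid

namespace DualBraid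

open CoxeterSystem

section Matsumoto

variable [Fintype B] [DecidableEq B] (cs : CoxeterSystem M W)

/-! ### The section of positive lifts of `W` to the Artin group -/

variable (M) in
/-- The standard generator of the Artin group. -/
def agen (i : B) : ArtinGroup M := PresentedGroup.of i

variable (M) in
/-- The product in the Artin group of a word in the standard generators. -/
def aprod (l : List B) : ArtinGroup M := (l.map (agen M)).prod

@[simp] lemma aprod_nil : aprod M [] = 1 := rfl

@[simp] lemma aprod_cons (i : B) (l : List B) : aprod M (i :: l) = agen M i * aprod M l := by
  simp [aprod]

@[simp] lemma aprod_append (l l' : List B) : aprod M (l ++ l') = aprod M l * aprod M l' := by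
  simp [aprod]

lemma aprod_braid {i j : B} (hij : i ≠ j) (h : M i j ≠ 0) :
    aprod M (alternatingWord i j (M i j)) = aprod M (alternatingWord j i (M i j)) := by
  have h1 : ∀ l : List B, aprod M l = PresentedGroup.mk (artinRels M) (l.map FreeGroup.of).prod := by
    intro l
    rw [map_list_prod, List.map_map]; rfl
  rw [h1, h1, ← mul_inv_eq_one, ← map_inv, ← map_mul]
  exact (QuotientGroup.eq_one_iff _).mpr (Subgroup.subset_normalClosure ⟨i, j, hij, h, rfl⟩)

lemma aprod_braid' {i j : B} (hij : i ≠ j) (h : M i j ≠ 0) :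
    aprod M (alternatingWord i j (M i j)) = aprod M (alternatingWord j i (M j i)) := by
  rw [aprod_braid hij h, M.symmetric i j]

/-- Two distinct right descents of `w` generate a finite dihedral group, whose longest element
is a right factor of `w`. -/
lemma exists_braid_suffix {i j : B} (hij : i ≠ j) {w : W}
    (hi : cs.length (w * cs.simple i) < cs.length w)
    (hj : cs.length (w * cs.simple j) < cs.length w) :
    M i j ≠ 0 ∧ ∃ z, cs.length w = cs.length z + M i j ∧
      w = z * cs.wordProd (alternatingWord i j (M i j)) ∧
      w = z * cs.wordProd (alternatingWord j i (M j i)) := by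
  obtain ⟨z, k, a, b, hab, hw, hl, hzi, hzj⟩ := exists_dihedral_decomp cs i j w
  have hab' : a ≠ b := by rcases hab with ⟨rfl, rfl⟩ | ⟨rfl, rfl⟩ <;> simp [hij, hij.symm]
  have ha : cs.length (w * cs.simple a) < cs.length w := by
    rcases hab with ⟨rfl, rfl⟩ | ⟨rfl, rfl⟩ <;> assumption
  have hza : cs.length z < cs.length (z * cs.simple a) ∧
      cs.length z < cs.length (z * cs.simple b) := by
    rcases hab with ⟨rfl, rfl⟩ | ⟨rfl, rfl⟩ <;> constructor <;> assumption
  have h1 : ¬ (M a b = 0 ∨ k < M a b) := by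
    intro hk
    obtain ⟨p, q, hp, hq, he⟩ := geom_alternating_nonneg cs hab' k hk
    have h2 : 0 ≤ geom cs w (sroot a) := by
      rw [hw, geom_mul_apply, he, map_add, map_smul, map_smul]
      exact add_nonneg (smul_nonneg hp (geom_sroot_nonneg cs _ _ hza.1))
        (smul_nonneg hq (geom_sroot_nonneg cs _ _ hza.2))
    rw [geom_sroot_nonneg_iff] at h2
    omega
  push Not at h1
  have h3 := le_of_dihedral_decomp cs (by rw [← hw]; exact hl) h1.1
  have h4 : k = M a b := by omega
  subst h4
  have h5 : cs.wordProd (alternatingWord a b (M a b)) =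
      cs.wordProd (alternatingWord b a (M b a)) := cs.wordProd_braidWord_eq a b
  rcases hab with ⟨rfl, rfl⟩ | ⟨rfl, rfl⟩
  · exact ⟨h1.1, z, hl, hw, by rw [← h5]; exact hw⟩
  · rw [M.symmetric b a]
    exact ⟨h1.1, z, hl, by rw [M.symmetric a b]; rw [← h5]; exact hw, hw⟩

lemma isReduced_of_append {l l' : List B} (h : cs.IsReduced (l ++ l')) : cs.IsReduced l := by
  have := h.take l.length
  simpa using this

/-- Matsumoto's theorem, for the Artin group. -/
theorem matsumoto (l l' : List B) (h : cs.IsReduced l) (h' : cs.IsReduced l')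
    (he : cs.wordProd l = cs.wordProd l') : aprod M l = aprod M l' := by
  induction hn : l.length using Nat.strong_induction_on generalizing l l' with
  | _ n ih =>
    subst hn
    have hlen : l.length = l'.length := by rw [← h.eq, ← h'.eq, he]
    rcases List.eq_nil_or_concat l with rfl | ⟨l1, i, hl1⟩
    · simp only [List.length_nil] at hlen
      rw [List.eq_nil_of_length_eq_zero hlen.symm]
    rcases List.eq_nil_or_concat l' with rfl | ⟨l2, j, hl2⟩
    · simp only [List.length_nil] at hlen
      rw [List.eq_nil_of_length_eq_zero hlen]
    rw [List.concat_eq_append] at hl1 hl2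
    subst hl1 hl2
    have r1 := isReduced_of_append cs h
    have r2 := isReduced_of_append cs h'
    have e1 : cs.wordProd (l1 ++ [i]) * cs.simple i = cs.wordProd l1 := by
      simp [wordProd_append]
    have e2 : cs.wordProd (l2 ++ [j]) * cs.simple j = cs.wordProd l2 := by
      simp [wordProd_append]
    by_cases hij : i = j
    · subst hij
      have := ih l1.length (by simp) l1 l2 r1 r2 (by rw [← e1, ← e2, he]) rfl
      simp [this]
    have d1 : cs.length (cs.wordProd (l1 ++ [i]) * cs.simple i) <
        cs.length (cs.wordProd (l1 ++ [i])) := by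
      rw [e1, h.eq, r1.eq]; simp
    have d2 : cs.length (cs.wordProd (l1 ++ [i]) * cs.simple j) <
        cs.length (cs.wordProd (l1 ++ [i])) := by
      rw [he, e2, h'.eq, r2.eq]; simp
    obtain ⟨hM, z, hz, hw1, hw2⟩ := exists_braid_suffix cs hij d1 d2
    obtain ⟨lz, rz, rfl⟩ := cs.exists_isReduced z
    have hlz := h.eq
    rw [hz, rz.eq] at hlz
    -- A reduced word with last letter `x` is compared with one whose last letters form the braid.
    have key : ∀ x y l0, l0.length = l1.length → M y x = M i j → cs.IsReduced l0 →
        cs.wordProd (l0 ++ [x]) = cs.wordProd lz * cs.wordProd (alternatingWord y x (M y x)) →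
        aprod M (l0 ++ [x]) = aprod M lz * aprod M (alternatingWord y x (M y x)) := by
      intro x y l0 hl0 hyx r0 e0
      obtain ⟨m, hm⟩ := Nat.exists_eq_succ_of_ne_zero (hyx.trans_ne hM)
      rw [hm, Nat.succ_eq_add_one, alternatingWord_succ, List.concat_eq_append] at e0 ⊢
      have e3 : cs.wordProd l0 = cs.wordProd (lz ++ alternatingWord x y m) := by
        simp only [wordProd_append, ← mul_assoc] at e0 ⊢
        exact mul_right_cancel e0
      have r3 : cs.IsReduced (lz ++ alternatingWord x y m) := by
        unfold CoxeterSystem.IsReduced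
        rw [← e3, r0.eq, hl0]
        simp only [List.length_append, length_alternatingWord, List.length_singleton] at hlz ⊢
        omega
      have := ih l0.length (by simp [hl0]) l0 _ r0 r3 e3 rfl
      simp only [aprod_append, this, mul_assoc]
    rw [key i j l1 rfl (M.symmetric j i) r1 hw2,
      key j i l2 (by simpa using hlen.symm) rfl r2 (he ▸ hw1), aprod_braid' hij hM]

/-- The positive lift of `w` to the Artin group, through any reduced word. -/
noncomputable def lam (w : W) : ArtinGroup M := aprod M (cs.exists_isReduced w).choose

lemma lam_wordProd {l : List B} (h : cs.IsReduced l) : lam cs (cs.wordProd l) = aprod M l := by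
  have h1 := (cs.exists_isReduced (cs.wordProd l)).choose_spec
  exact matsumoto cs _ _ h1.1 h h1.2.symm

lemma lam_one : lam cs 1 = 1 := by
  have h : cs.IsReduced [] := by simp [CoxeterSystem.IsReduced]
  simpa using lam_wordProd cs h

lemma lam_simple_mul {w : W} {i : B} (h : 0 ≤ geom cs w⁻¹ (sroot i)) :
    lam cs (cs.simple i * w) = agen M i * lam cs w := by
  rw [geom_inv_sroot_nonneg_iff] at h
  obtain ⟨l, hl, rfl⟩ := cs.exists_isReduced w
  have h1 : cs.IsReduced (i :: l) := by
    unfold CoxeterSystem.IsReduced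
    rw [wordProd_cons, List.length_cons, ← hl.eq]
    rcases cs.length_simple_mul (cs.wordProd l) i with h' | h' <;> omega
  rw [← wordProd_cons, lam_wordProd cs h1, lam_wordProd cs hl, aprod_cons]

lemma lam_simple_mul' {w : W} {i : B} (h : geom cs w⁻¹ (sroot i) ≤ 0) :
    lam cs (cs.simple i * w) = (agen M i)⁻¹ * lam cs w := by
  have h1 : 0 ≤ geom cs (cs.simple i * w)⁻¹ (sroot i) := by
    rw [mul_inv_rev, geom_mul_apply, inv_simple, geom_simple, srefl_sroot_self, map_neg]
    exact neg_nonneg.mpr h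
  rw [eq_inv_mul_iff_mul_eq, ← lam_simple_mul cs h1]
  simp

/-- The element `λ(vu) λ(u)⁻¹` of the Artin group, a lift of `v` starting at the chamber of `u`,
depends only on the position of that chamber with respect to the walls of the inversions of `v`. -/
lemma lam_mul_lam_inv_congr {v u u' : W}
    (h : ∀ α, IsRoot cs α → 0 ≤ α → geom cs v α ≤ 0 →
      (geom cs u⁻¹ α ≤ 0 ↔ geom cs u'⁻¹ α ≤ 0)) :
    lam cs (v * u) * (lam cs u)⁻¹ = lam cs (v * u') * (lam cs u')⁻¹ := by
  induction hn : cs.length v using Nat.strong_induction_on generalizing v u u' with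
  | _ n ih =>
    subst hn
    by_cases hv : v = 1
    · subst hv; simp
    obtain ⟨i, hi⟩ := cs.exists_rightDescent_of_ne_one hv
    unfold CoxeterSystem.IsRightDescent at hi
    have hvi := geom_sroot_nonpos cs v i hi
    have hsign := h _ (isRoot_sroot i) (sroot_nonneg i) hvi
    obtain ⟨v', rfl⟩ : ∃ v', v = v' * cs.simple i := ⟨v * cs.simple i, by simp⟩
    rw [simple_mul_simple_cancel_right] at hi
    have h1 := ih _ hi (v := v') (u := cs.simple i * u) (u' := cs.simple i * u') (by
      intro α hα h0 hv'
      have hne : α ≠ sroot i := by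
        rintro rfl
        exact (hα.geom v').not_both (geom_sroot_nonneg cs v' i hi) hv'
      have := h _ (hα.srefl i) (hα.srefl_nonneg h0 hne)
        (by rwa [geom_mul_apply, geom_simple, srefl_invol])
      simpa only [mul_inv_rev, inv_simple, geom_mul_apply, geom_simple] using this) rfl
    have h2 : lam cs (cs.simple i * u) * (lam cs u)⁻¹ =
        lam cs (cs.simple i * u') * (lam cs u')⁻¹ := by
      by_cases hu : geom cs u⁻¹ (sroot i) ≤ 0
      · rw [lam_simple_mul' cs hu, lam_simple_mul' cs (hsign.mp hu)]; simp
      · have hu' : ¬ geom cs u'⁻¹ (sroot i) ≤ 0 := fun h => hu (hsign.mpr h)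
        rw [((isRoot_sroot i).geom _).not_nonpos_iff] at hu hu'
        rw [lam_simple_mul cs hu, lam_simple_mul cs hu']; simp
    calc lam cs (v' * cs.simple i * u) * (lam cs u)⁻¹
        = (lam cs (v' * (cs.simple i * u)) * (lam cs (cs.simple i * u))⁻¹) *
          (lam cs (cs.simple i * u) * (lam cs u)⁻¹) := by rw [mul_assoc v']; group
      _ = (lam cs (v' * (cs.simple i * u')) * (lam cs (cs.simple i * u'))⁻¹) *
          (lam cs (cs.simple i * u') * (lam cs u')⁻¹) := by rw [h1, h2]
      _ = _ := by rw [mul_assoc v']; group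

end Matsumoto

end DualBraid

namespace DualBraid

open CoxeterSystem

section Form

/-! ### The alternating form attached to an ordering of the simple roots -/

variable (M) in
/-- The sum of the off-diagonal contributions of the letters of `l` to `⟨α_s, x⟩`. -/
noncomputable def kap (l : List B) (s : B) (x : B → ℝ) : ℝ := (l.map fun j => gram M s j * x j).sum

variable (M) in
/-- The alternating form `ω_l` with `ω_l(α_j, α_i) = ⟨α_i, α_j⟩` whenever `i` precedes `j` in `l`;
it is the antisymmetrization of the Euler form of the corresponding orientation of the Coxeter
graph. -/
noncomputable def om : List B → (B → ℝ) → (B → ℝ) → ℝ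
  | [], _, _ => 0
  | s :: l, x, y => om l x y + kap M l s x * y s - x s * kap M l s y

lemma kap_nil (s : B) (x : B → ℝ) : kap M [] s x = 0 := rfl

lemma kap_cons (l : List B) (t s : B) (x : B → ℝ) :
    kap M (t :: l) s x = gram M s t * x t + kap M l s x := by simp [kap]

lemma kap_concat (l : List B) (t s : B) (x : B → ℝ) :
    kap M (l ++ [t]) s x = kap M l s x + gram M s t * x t := by simp [kap]

lemma kap_add (l : List B) (s : B) (x y : B → ℝ) :
    kap M l s (x + y) = kap M l s x + kap M l s y := by
  induction l with
  | nil => simp [kap]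
  | cons t l ih => simp only [kap_cons, ih, Pi.add_apply]; ring

lemma kap_smul (l : List B) (s : B) (c : ℝ) (x : B → ℝ) :
    kap M l s (c • x) = c * kap M l s x := by
  induction l with
  | nil => simp [kap]
  | cons t l ih => simp only [kap_cons, ih, Pi.smul_apply, smul_eq_mul]; ring

lemma kap_congr {l : List B} {s : B} {x x' : B → ℝ} (h : ∀ j ∈ l, x j = x' j) :
    kap M l s x = kap M l s x' := by
  unfold kap
  rw [List.map_congr_left]
  intro j hj
  rw [h j hj]

lemma om_cons (s : B) (l : List B) (x y : B → ℝ) :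
    om M (s :: l) x y = om M l x y + kap M l s x * y s - x s * kap M l s y := rfl

lemma om_add_left (l : List B) (x x' y : B → ℝ) :
    om M l (x + x') y = om M l x y + om M l x' y := by
  induction l with
  | nil => simp [om]
  | cons t l ih => simp only [om_cons, ih, kap_add, Pi.add_apply]; ring

lemma om_smul_left (l : List B) (c : ℝ) (x y : B → ℝ) :
    om M l (c • x) y = c * om M l x y := by
  induction l with
  | nil => simp [om]
  | cons t l ih => simp only [om_cons, ih, kap_smul, Pi.smul_apply, smul_eq_mul]; ring

lemma om_neg_left (l : List B) (x y : B → ℝ) : om M l (-x) y = - om M l x y := by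
  rw [← neg_one_smul ℝ x, om_smul_left]; ring

lemma om_zero_left (l : List B) (y : B → ℝ) : om M l 0 y = 0 := by
  rw [← zero_smul ℝ (0 : B → ℝ), om_smul_left]; ring

lemma om_self (l : List B) (x : B → ℝ) : om M l x x = 0 := by
  induction l with
  | nil => simp [om]
  | cons t l ih => simp only [om_cons, ih]; ring

lemma om_congr {l : List B} {x x' y y' : B → ℝ} (hx : ∀ j ∈ l, x j = x' j)
    (hy : ∀ j ∈ l, y j = y' j) : om M l x y = om M l x' y' := by
  induction l with
  | nil => simp [om]
  | cons t l ih =>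
    simp only [List.mem_cons, forall_eq_or_imp] at hx hy
    rw [om_cons, om_cons, ih hx.2 hy.2, kap_congr hx.2, kap_congr hy.2, hx.1, hy.1]

lemma om_concat (l : List B) (s : B) (x y : B → ℝ) :
    om M (l ++ [s]) x y = om M l x y - (kap M l s x * y s - x s * kap M l s y) := by
  induction l with
  | nil => simp [om, kap]
  | cons t l ih =>
    rw [List.cons_append, om_cons, om_cons, ih, kap_concat, kap_concat, kap_cons, kap_cons,
      gram_symm t s]
    ring

/-- `x` is supported on the letters of `l`. -/
def SuppIn (l : List B) (x : B → ℝ) : Prop := ∀ j, j ∉ l → x j = 0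

variable [Fintype B] [DecidableEq B]

lemma bil_sroot_supp {s : B} {l : List B} (hl : (s :: l).Nodup) {x : B → ℝ}
    (hx : SuppIn (s :: l) x) : bil M (sroot s) x = x s + kap M l s x := by
  have h1 : ∑ j, gram M s j * x j = kap M (s :: l) s x := by
    unfold kap
    rw [← List.sum_toFinset _ hl]
    symm
    apply Finset.sum_subset (Finset.subset_univ _)
    intro j _ hj
    rw [hx j (by simpa using hj), mul_zero]
  rw [bil_sroot, h1, kap_cons, gram_self, one_mul]

lemma srefl_supp {l : List B} {s : B} (hs : s ∈ l) {x : B → ℝ} (hx : SuppIn l x) :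
    SuppIn l (srefl M s x) := by
  intro j hj
  rw [srefl_coord (by rintro rfl; exact hj hs), hx j hj]

lemma srefl_self_supp {s : B} {l : List B} (hl : (s :: l).Nodup) {x : B → ℝ}
    (hx : SuppIn (s :: l) x) : srefl M s x s = - x s - 2 * kap M l s x := by
  rw [srefl_apply, bil_sroot_supp hl hx]
  simp
  ring

/-- Rotating the ordering corresponds to applying the simple reflection to the form. -/
lemma om_rotate {s : B} {l : List B} (hl : (s :: l).Nodup) {x y : B → ℝ}
    (hx : SuppIn (s :: l) x) (hy : SuppIn (s :: l) y) :
    om M (l ++ [s]) (srefl M s x) (srefl M s y) = om M (s :: l) x y := by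
  have hs : s ∉ l := (List.nodup_cons.mp hl).1
  have hc : ∀ z : B → ℝ, ∀ j ∈ l, srefl M s z j = z j := fun z j hj =>
    srefl_coord (by rintro rfl; exact hs hj)
  rw [om_concat, om_congr (hc x) (hc y), kap_congr (hc x), kap_congr (hc y),
    srefl_self_supp hl hx, srefl_self_supp hl hy, om_cons]
  ring

lemma om_sroot {s : B} {l : List B} (hs : s ∉ l) (y : B → ℝ) :
    om M (s :: l) (sroot s) y = - kap M l s y := by
  have hc : ∀ j ∈ l, sroot s j = (0 : B → ℝ) j := fun j hj =>
    sroot_ne (by rintro rfl; exact hs hj)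
  have h0 : kap M l s 0 = 0 := by
    rw [← zero_smul ℝ (0 : B → ℝ), kap_smul]; ring
  rw [om_cons, om_congr hc (fun _ _ => rfl), om_zero_left, kap_congr hc, h0]
  simp

end Form

section Lifts

variable [Fintype B] [DecidableEq B] (cs : CoxeterSystem M W)

/-! ### Chambers and the lifts of reflections -/

lemma cone_mem {P : (B → ℝ) → Prop} (hadd : ∀ x y, P x → P y → P (x + y))
    (hsmul : ∀ (c : ℝ) x, 0 < c → P x → P (c • x)) {f : (B → ℝ) →ₗ[ℝ] (B → ℝ)}
    (hP : ∀ i, P (f (sroot i))) {δ : B → ℝ} (h0 : 0 ≤ δ) (hne : δ ≠ 0) : P (f δ) := by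
  have h1 : δ = ∑ i, δ i • sroot i := by
    ext j
    simp [sroot, Finset.sum_apply, Pi.single_apply]
  have h2 : f δ = 0 ∧ δ = 0 ∨ P (f δ) := by
    rw [h1]
    apply Finset.sum_induction (fun i => δ i • sroot i) (fun x => f x = 0 ∧ x = 0 ∨ P (f x))
    · rintro a b (⟨ha, ha'⟩ | ha) (⟨hb, hb'⟩ | hb)
      · left; simp [ha', hb']
      · right; simpa [ha'] using hb
      · right; simpa [hb'] using ha
      · right; rw [map_add]; exact hadd _ _ ha hb
    · simp
    · intro i _
      rcases (h0 i).eq_or_lt with h | h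
      · left; simp only [Pi.zero_apply] at h; simp [← h]
      · right; rw [map_smul]; exact hsmul _ _ h (hP i)
  exact h2.resolve_left fun h => hne h.2

/-- A half-space system of roots (a set of roots cut out by a total preorder compatible with the
vector space structure) is the set of roots positive on some chamber. -/
lemma exists_chamber [Finite W] {P : (B → ℝ) → Prop} (hadd : ∀ x y, P x → P y → P (x + y))
    (hsmul : ∀ (c : ℝ) x, 0 < c → P x → P (c • x)) (hP0 : ¬ P 0)
    (htot : ∀ α, IsRoot cs α → P α ∨ P (-α)) :
    ∃ u, ∀ α, IsRoot cs α → (0 ≤ geom cs u⁻¹ α ↔ P α) := by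
  have hnot : ∀ x, P x → P (-x) → False := fun x h1 h2 => hP0 (by simpa using hadd _ _ h1 h2)
  set N : W → Set (B → ℝ) := fun u => {α | IsRoot cs α ∧ 0 ≤ α ∧ P (-geom cs u α)} with hN
  have hfin : ∀ u, (N u).Finite := fun u => (finite_roots cs).subset fun α h => h.1
  -- A chamber minimizing the number of positive roots of the wrong sign.
  obtain ⟨u, -, hu⟩ := Set.exists_min_image (Set.univ : Set W) (fun u => (N u).ncard)
    Set.finite_univ ⟨1, trivial⟩
  have hsimple : ∀ i, P (geom cs u (sroot i)) := by
    intro i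
    by_contra hc
    have hneg := (htot _ ((isRoot_sroot i).geom u)).resolve_left hc
    have hmap : ∀ α ∈ N (u * cs.simple i), srefl M i α ∈ N u \ {sroot i} := by
      rintro α ⟨hα, h0, hPα⟩
      have hne : α ≠ sroot i := by
        rintro rfl
        rw [geom_mul_apply, geom_simple, srefl_sroot_self, map_neg, neg_neg] at hPα
        exact hc hPα
      refine ⟨⟨hα.srefl i, hα.srefl_nonneg h0 hne, ?_⟩, ?_⟩
      · rwa [geom_mul_apply, geom_simple] at hPα
      · intro h
        have h' : srefl M i (srefl M i α) = srefl M i (sroot i) := by rw [h]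
        rw [srefl_invol, srefl_sroot_self] at h'
        refine hα.not_both h0 ?_
        rw [h']
        simpa using sroot_nonneg i
    have h1 : (N (u * cs.simple i)).ncard ≤ (N u \ {sroot i}).ncard := by
      refine Set.ncard_le_ncard_of_injOn (srefl M i) hmap ?_ ((hfin u).subset Set.sdiff_subset)
      intro x _ y _ hxy
      rw [← srefl_invol (M := M) i x, hxy, srefl_invol]
    have h2 : (N u \ {sroot i}).ncard < (N u).ncard :=
      Set.ncard_sdiff_singleton_lt_of_mem ⟨isRoot_sroot i, sroot_nonneg i, hneg⟩ (hfin u)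
    have h3 := hu (u * cs.simple i) trivial
    omega
  have hpos : ∀ δ, IsRoot cs δ → 0 ≤ δ → P (geom cs u δ) := fun δ hδ h0 =>
    cone_mem hadd hsmul hsimple h0 hδ.ne_zero
  refine ⟨u, fun α hα => ⟨fun h => ?_, fun h => ?_⟩⟩
  · simpa using hpos _ (hα.geom u⁻¹) h
  · rw [← (hα.geom u⁻¹).not_nonpos_iff]
    intro hc
    have := hpos _ (hα.geom u⁻¹).neg (neg_nonneg.mpr hc)
    rw [map_neg, geom_apply_inv] at this
    exact hnot _ h this

/-- There is a chamber whose position relative to the walls is prescribed by the sign of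
`ω_l(·, β)`, ties being broken first by the sign of `⟨·, β⟩` and then negatively. -/
lemma exists_adapted [Finite W] (l : List B) (β : B → ℝ) : ∃ u, ∀ α, IsRoot cs α →
    (0 < om M l α β → geom cs u⁻¹ α ≤ 0) ∧ (om M l α β < 0 → 0 ≤ geom cs u⁻¹ α) ∧
    (om M l α β = 0 → 0 < bil M α β → 0 ≤ geom cs u⁻¹ α) ∧
    (om M l α β = 0 → bil M α β = 0 → 0 ≤ α → geom cs u⁻¹ α ≤ 0) := by
  -- The lexicographic order of the three functionals `-ω_l(·, β)`, `⟨·, β⟩` and minus the height.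
  set P : (B → ℝ) → Prop := fun x => om M l x β < 0 ∨
    (om M l x β = 0 ∧ (0 < bil M x β ∨ (bil M x β = 0 ∧ ∑ j, x j < 0))) with hP
  have hht : ∀ α, IsRoot cs α → 0 ≤ α → 0 < ∑ j, α j := by
    intro α hα h0
    have : ∑ j, α j ≠ 0 := by
      intro h
      rw [Finset.sum_eq_zero_iff_of_nonneg fun i _ => h0 i] at h
      exact hα.ne_zero (funext fun j => h j (Finset.mem_univ j))
    exact lt_of_le_of_ne (Finset.sum_nonneg fun i _ => h0 i) this.symm
  obtain ⟨u, hu⟩ := exists_chamber cs (P := P) (by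
      intro x y hx hy
      simp only [hP, om_add_left, map_add, LinearMap.add_apply, Pi.add_apply,
        Finset.sum_add_distrib] at hx hy ⊢
      rcases hx with hx | ⟨hx, hx' | ⟨hx', hx''⟩⟩ <;> rcases hy with hy | ⟨hy, hy' | ⟨hy', hy''⟩⟩
      · left; linarith
      · left; linarith
      · left; linarith
      · left; linarith
      · right; exact ⟨by linarith, Or.inl (by linarith)⟩
      · right; exact ⟨by linarith, Or.inl (by linarith)⟩
      · left; linarith
      · right; exact ⟨by linarith, Or.inl (by linarith)⟩
      · right; exact ⟨by linarith, Or.inr ⟨by linarith, by linarith⟩⟩)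
    (by
      intro c x hc hx
      simp only [hP, om_smul_left, map_smul, LinearMap.smul_apply, Pi.smul_apply, smul_eq_mul,
        ← Finset.mul_sum] at hx ⊢
      rcases hx with hx | ⟨hx, hx' | ⟨hx', hx''⟩⟩
      · left; exact mul_neg_of_pos_of_neg hc hx
      · right; exact ⟨by rw [hx, mul_zero], Or.inl (mul_pos hc hx')⟩
      · right; exact ⟨by rw [hx, mul_zero], Or.inr ⟨by rw [hx', mul_zero],
          mul_neg_of_pos_of_neg hc hx''⟩⟩)
    (by simp [hP, om_zero_left])
    (by
      intro α hα
      have hne : ∑ j, α j ≠ 0 := by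
        rcases hα.nonneg_or_nonpos with h | h
        · exact (hht α hα h).ne'
        · have := hht _ hα.neg (neg_nonneg.mpr h)
          simp only [Pi.neg_apply, Finset.sum_neg_distrib] at this
          linarith
      simp only [hP, om_neg_left, map_neg, LinearMap.neg_apply, Pi.neg_apply,
        Finset.sum_neg_distrib, neg_neg_iff_pos, neg_eq_zero, neg_pos]
      rcases lt_trichotomy (om M l α β) 0 with h | h | h
      · simp [h]
      · rcases lt_trichotomy (bil M α β) 0 with h' | h' | h'
        · simp [h, h']
        · simp only [h, h', lt_irrefl, true_and, false_or]
          exact lt_or_gt_of_ne hne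
        · simp [h, h']
      · simp [h])
  refine ⟨u, fun α hα => ⟨fun h => ?_, fun h => ?_, fun h h' => ?_, fun h h' h0 => ?_⟩⟩
  · rw [← (hα.geom u⁻¹).not_nonneg_iff, hu α hα]
    rintro (h1 | ⟨h1, -⟩) <;> linarith
  · rw [hu α hα]; exact Or.inl h
  · rw [hu α hα]; exact Or.inr ⟨h, Or.inl h'⟩
  · rw [← (hα.geom u⁻¹).not_nonneg_iff, hu α hα]
    have := hht α hα h0
    rintro (h1 | ⟨h1, h2 | ⟨-, h2⟩⟩) <;> linarith

/-- The chamber of `u` separates the inversions of the reflection `t` in the way prescribed by the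
form `ω_l`. -/
def Good (l : List B) (t u : W) : Prop :=
  ∀ β, HasRoot cs t β → ∀ α, IsRoot cs α → 0 ≤ α → geom cs t α ≤ 0 →
    (geom cs u⁻¹ α ≤ 0 ↔ 0 < om M l α β)

open Classical in
/-- The dual braid generator `φ_l(t)` lifting the reflection `t`, for the ordering `l`: the lift
`λ(tu) λ(u)⁻¹`, for any `u` such that `Good l t u` (the default value `1` never occurs for a
reflection of a finite Coxeter group). -/
noncomputable def phi (l : List B) (t : W) : ArtinGroup M :=
  if h : ∃ u, Good cs l t u then lam cs (t * h.choose) * (lam cs h.choose)⁻¹ else 1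

variable {cs}

lemma phi_eq {l : List B} {t u : W} {β : B → ℝ} (hβ : HasRoot cs t β) (h : Good cs l t u) :
    phi cs l t = lam cs (t * u) * (lam cs u)⁻¹ := by
  have h' : ∃ u, Good cs l t u := ⟨u, h⟩
  rw [phi, dif_pos h']
  apply lam_mul_lam_inv_congr
  intro α hα h0 ht
  rw [h'.choose_spec β hβ α hα h0 ht, h β hβ α hα h0 ht]

lemma exists_good [Finite W] (l : List B) (t : W) : ∃ u, Good cs l t u := by
  by_cases h : ∃ β, HasRoot cs t β
  · obtain ⟨β, hβ⟩ := h
    obtain ⟨u, hu⟩ := exists_adapted cs l β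
    refine ⟨u, fun β' hβ' α hα h0 ht => ?_⟩
    obtain rfl := hβ'.unique hβ
    obtain ⟨h1, h2, h3, -⟩ := hu α hα
    refine ⟨fun h => ?_, h1⟩
    by_contra hc
    refine (hα.geom u⁻¹).not_both ?_ h
    rcases (not_lt.mp hc).lt_or_eq with h' | h'
    · exact h2 h'
    · exact h3 h' (hβ.bil_pos hα h0 ht)
  · exact ⟨1, fun β hβ => absurd ⟨β, hβ⟩ h⟩

variable (cs) in
lemma phi_simple (l : List B) (i : B) : phi cs l (cs.simple i) = agen M i := by
  rw [phi_eq (hasRoot_simple i) (u := 1)]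
  · rw [lam_simple_mul, lam_one]
    · simp
    · simpa using sroot_nonneg i
  · intro β hβ α hα h0 ht
    obtain rfl := hβ.unique (hasRoot_simple i)
    have : α = sroot i := by
      by_contra hne
      rw [geom_simple] at ht
      exact (hα.srefl i).not_both (hα.srefl_nonneg h0 hne) ht
    subst this
    simp only [inv_one, geom_one_apply, om_self, lt_irrefl, iff_false]
    exact fun h => hα.not_both h0 h

/-- For a reflection in the parabolic subgroup of `l`, the lifts attached to `s :: l` and to `l`
agree: the letter `s` does not contribute to `ω`, nor to the inversions of `t`. -/
lemma phi_cons [Finite W] {l : List B} {s : B} (hs : s ∉ l) {t : W} {β : B → ℝ}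
    (hβ : HasRoot cs t β) (hsupp : SuppIn l β) : phi cs (s :: l) t = phi cs l t := by
  obtain ⟨u, hu⟩ := exists_good (cs := cs) l t
  rw [phi_eq hβ hu, phi_eq hβ (u := u)]
  intro β' hβ' α hα h0 ht
  obtain rfl := hβ'.unique hβ
  rw [hu _ hβ α hα h0 ht, om_cons, hsupp s hs, hβ.coord_zero h0 ht (hsupp s hs)]
  simp

/-- Rotating the ordering conjugates the lifts. -/
lemma phi_rotate [Finite W] {l : List B} {s : B} (hl : (s :: l).Nodup) {t : W} {β : B → ℝ}
    (hβ : HasRoot cs t β) (hsupp : SuppIn (s :: l) β) :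
    phi cs (l ++ [s]) (cs.simple s * t * cs.simple s) =
      (agen M s)⁻¹ * phi cs (s :: l) t * agen M s := by
  have hs : s ∉ l := (List.nodup_cons.mp hl).1
  by_cases hne : β = sroot s
  · subst hne
    obtain rfl := hβ.eq_of_root (hasRoot_simple s)
    rw [simple_mul_simple_cancel_right, phi_simple, phi_simple]; simp
  have hβ0 : 0 ≤ srefl M s β := hβ.1.srefl_nonneg hβ.2.1 hne
  have hβ' : HasRoot cs (cs.simple s * t * cs.simple s) (srefl M s β) := by
    have := hβ.conj (cs.simple s) (by simpa using hβ0)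
    simpa using this
  have hbil := bil_sroot_supp (M := M) hl hsupp
  have hom := om_sroot (M := M) hs β
  have hk : β s ≤ - 2 * kap M l s β := by
    have := hβ0 s
    rw [srefl_self_supp hl hsupp] at this
    simp only [Pi.zero_apply] at this
    linarith
  have hβs : 0 ≤ β s := hβ.2.1 s
  have hzero : om M (s :: l) (sroot s) β = 0 → bil M (sroot s) β = 0 := by
    intro h; linarith
  obtain ⟨u, hu⟩ := exists_adapted cs (s :: l) β
  have hus : geom cs u⁻¹ (sroot s) ≤ 0 := by
    obtain ⟨h1, -, -, h4⟩ := hu _ (isRoot_sroot s)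
    rcases (show 0 ≤ om M (s :: l) (sroot s) β by linarith).eq_or_lt with h | h
    · exact h4 h.symm (hzero h.symm) (sroot_nonneg s)
    · exact h1 h
  have huts : geom cs (t * u)⁻¹ (sroot s) ≤ 0 := by
    rw [mul_inv_rev, hβ.inv_eq, geom_mul_apply]
    rcases (show 0 ≤ om M (s :: l) (sroot s) β by linarith).eq_or_lt with h | h
    · rw [hβ.2.2, bil_symm, hzero h.symm]; simpa using hus
    · refine (hu _ ((isRoot_sroot s).geom t)).1 ?_
      rw [hβ.2.2, sub_eq_add_neg, ← neg_smul, om_add_left, om_smul_left, om_self]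
      simpa using h
  have hgood : Good cs (l ++ [s]) (cs.simple s * t * cs.simple s) (cs.simple s * u) := by
    intro β'' hβ'' α hα h0 ht
    obtain rfl := hβ''.unique hβ'
    rw [mul_inv_rev, inv_simple, geom_mul_apply, geom_simple]
    by_cases hαs : α = sroot s
    · subst hαs
      have h1 : om M (l ++ [s]) (sroot s) (srefl M s β) = kap M l s β := by
        have h2 := om_rotate (M := M) hl (x := -sroot s) (y := β) (by
          intro j hj
          have : j ≠ s := by rintro rfl; simp at hj
          simp [sroot_ne this]) hsupp
        rw [map_neg, srefl_sroot_self, neg_neg] at h2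
        rw [h2, om_neg_left, hom, neg_neg]
      rw [h1, srefl_sroot_self, map_neg]
      constructor
      · intro h
        exact (((isRoot_sroot s).geom u⁻¹).not_both (neg_nonpos.mp h) hus).elim
      · intro h; linarith
    · have hsα := hα.srefl s
      have hsupp' : SuppIn (s :: l) α := fun j hj =>
        hβ'.coord_zero h0 ht (srefl_supp (List.mem_cons_self) hsupp j hj)
      have h1 : om M (l ++ [s]) α (srefl M s β) = om M (s :: l) (srefl M s α) β := by
        rw [← om_rotate hl (srefl_supp (List.mem_cons_self) hsupp') hsupp, srefl_invol]
      have h2 : bil M (srefl M s α) β = bil M α (srefl M s β) := by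
        rw [← bil_geom cs (cs.simple s), geom_simple, srefl_invol]
      have h3 := hβ'.bil_pos hα h0 ht
      obtain ⟨k1, k2, k3, -⟩ := hu _ hsα
      rw [h1]
      refine ⟨fun h => ?_, k1⟩
      by_contra hc
      refine (hsα.geom u⁻¹).not_both ?_ h
      rcases (not_lt.mp hc).lt_or_eq with h' | h'
      · exact k2 h'
      · exact k3 h' (by rwa [h2])
  rw [phi_eq hβ' hgood, phi_eq hβ (u := u)]
  · have e : cs.simple s * t * cs.simple s * (cs.simple s * u) = cs.simple s * (t * u) := by
      simp [mul_assoc]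
    rw [e, lam_simple_mul' cs huts, lam_simple_mul' cs hus]
    group
  · intro β'' hβ'' α hα h0 ht
    obtain rfl := hβ''.unique hβ
    obtain ⟨k1, k2, k3, -⟩ := hu _ hα
    refine ⟨fun h => ?_, k1⟩
    by_contra hc
    refine (hα.geom u⁻¹).not_both ?_ h
    rcases (not_lt.mp hc).lt_or_eq with h' | h'
    · exact k2 h'
    · exact k3 h' (hβ.bil_pos hα h0 ht)

end Lifts

end DualBraid

namespace DualBraid

open CoxeterSystem

section Factorizations

variable [Fintype B] [DecidableEq B] (cs : CoxeterSystem M W)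

/-! ### Reflection factorizations of parabolic Coxeter elements -/

/-- The form is nondegenerate on the span of any set of simple roots, `W` being finite: averaging
over the parabolic subgroup kills the simple roots in `l` but fixes `y`. -/
lemma eq_zero_of_bil_eq_zero (cs : CoxeterSystem M W) [Finite W] {l : List B} {y : B → ℝ} (hy : SuppIn l y)
    (h : ∀ i ∈ l, bil M (sroot i) y = 0) : y = 0 := by
  classical
  set G : Subgroup W := Subgroup.closure {w | ∃ i ∈ l, w = cs.simple i} with hG
  have hmem : ∀ i ∈ l, cs.simple i ∈ G := fun i hi => Subgroup.subset_closure ⟨i, hi, rfl⟩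
  have := Fintype.ofFinite G
  set A : (B → ℝ) →ₗ[ℝ] (B → ℝ) := ∑ g : G, geom cs (g : W) with hA
  have hAapp : ∀ x, A x = ∑ g : G, geom cs (g : W) x := fun x => by simp [hA]
  have hinv : ∀ i ∈ l, A (sroot i) = 0 := by
    intro i hi
    have h1 : A (srefl M i (sroot i)) = A (sroot i) := by
      rw [hAapp, hAapp]
      refine Fintype.sum_equiv (Equiv.mulRight (⟨cs.simple i, hmem i hi⟩ : G)) _ _ fun g => ?_
      rw [← geom_simple cs i, ← geom_mul_apply]
      rfl
    rw [srefl_sroot_self, map_neg] at h1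
    exact self_eq_neg.mp h1.symm
  have hAy : A y = 0 := by
    have h1 : y = ∑ i, y i • sroot i := by
      ext j
      simp [sroot, Finset.sum_apply, Pi.single_apply]
    rw [h1, map_sum]
    refine Finset.sum_eq_zero fun i _ => ?_
    by_cases hi : i ∈ l
    · rw [map_smul, hinv i hi, smul_zero]
    · rw [hy i hi]; simp
  have hfix : ∀ g ∈ G, geom cs g y = y := by
    intro g hg
    induction hg using Subgroup.closure_induction with
    | mem x hx =>
      obtain ⟨i, hi, rfl⟩ := hx
      rw [geom_simple, srefl_apply, h i hi]; simp
    | one => simp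
    | mul x z _ _ hx hz => rw [geom_mul_apply, hz, hx]
    | inv x _ hx =>
      conv_lhs => rw [← hx]
      simp
  rw [hAapp, Finset.sum_congr rfl fun (g : G) _ => hfix g g.2, Finset.sum_const,
    ← Nat.cast_smul_eq_nsmul ℝ, smul_eq_zero] at hAy
  refine hAy.resolve_left ?_
  simp

lemma geom_wordProd_coord (l : List B) (y : B → ℝ) {j : B} (hj : j ∉ l) :
    geom cs (cs.wordProd l) y j = y j := by
  induction l with
  | nil => simp
  | cons s l ih =>
    simp only [List.mem_cons, not_or] at hj
    rw [wordProd_cons, geom_mul_apply, geom_simple, srefl_coord hj.1, ih hj.2]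

lemma geom_wordProd_supp {l : List B} {y : B → ℝ} (hy : SuppIn l y) :
    SuppIn l (geom cs (cs.wordProd l) y) := fun j hj => by
  rw [geom_wordProd_coord cs l y hj, hy j hj]

/-- A vector fixed by a parabolic Coxeter element is orthogonal to the corresponding roots. -/
lemma bil_eq_zero_of_fixed {l : List B} (hl : l.Nodup) {y : B → ℝ}
    (h : geom cs (cs.wordProd l) y = y) : ∀ i ∈ l, bil M (sroot i) y = 0 := by
  induction l with
  | nil => simp
  | cons s l ih =>
    have hs := (List.nodup_cons.mp hl).1
    rw [wordProd_cons, geom_mul_apply, geom_simple, srefl_apply] at h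
    have h1 := congrFun h s
    simp only [Pi.sub_apply, Pi.smul_apply, sroot_self, smul_eq_mul, mul_one,
      geom_wordProd_coord cs l y hs] at h1
    have h2 : bil M (sroot s) (geom cs (cs.wordProd l) y) = 0 := by linarith
    rw [h2, mul_zero, zero_smul, sub_zero] at h
    rw [h] at h2
    simp only [List.mem_cons, forall_eq_or_imp]
    exact ⟨h2, ih (List.nodup_cons.mp hl).2 h⟩

lemma eq_zero_of_fixed [Finite W] {l : List B} (hl : l.Nodup) {y : B → ℝ} (hy : SuppIn l y)
    (h : geom cs (cs.wordProd l) y = y) : y = 0 :=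
  eq_zero_of_bil_eq_zero cs hy (bil_eq_zero_of_fixed cs hl h)

/-- The space of vectors supported on the letters of `l`. -/
def suppSpace (l : List B) : Submodule ℝ (B → ℝ) where
  carrier := {x | SuppIn l x}
  add_mem' {x y} hx hy j hj := by simp [hx j hj, hy j hj]
  zero_mem' _ _ := rfl
  smul_mem' c x hx j hj := by simp [hx j hj]

lemma mem_suppSpace {l : List B} {x : B → ℝ} : x ∈ suppSpace l ↔ SuppIn l x := Iff.rfl

lemma finrank_suppSpace {l : List B} (hl : l.Nodup) :
    Module.finrank ℝ (suppSpace l) = l.length := by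
  have h1 : suppSpace l = Submodule.span ℝ
      (Set.range fun k : {i // i ∈ l.toFinset} => (sroot (k : B) : B → ℝ)) := by
    apply le_antisymm
    · intro x hx
      have h1 : x = ∑ i, x i • sroot i := by
        ext j
        simp [sroot, Finset.sum_apply, Pi.single_apply]
      rw [h1]
      refine Submodule.sum_mem _ fun i _ => ?_
      by_cases hi : i ∈ l
      · exact Submodule.smul_mem _ _ (Submodule.subset_span ⟨⟨i, by simpa using hi⟩, rfl⟩)
      · rw [hx i hi, zero_smul]; exact Submodule.zero_mem _
    · rw [Submodule.span_le]
      rintro _ ⟨k, rfl⟩ j hj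
      refine sroot_ne ?_
      rintro rfl
      exact hj (List.mem_toFinset.mp k.2)
  rw [h1, finrank_span_eq_card]
  · rw [Fintype.card_coe, List.toFinset_card_of_nodup hl]
  · have h2 := (Pi.basisFun ℝ B).linearIndependent.comp
      (fun k : {i // i ∈ l.toFinset} => (k : B)) Subtype.val_injective
    convert h2 using 1
    ext k j
    simp [sroot]

/-- The moved space of a parabolic Coxeter element contains all the corresponding roots. -/
lemma exists_moved [Finite W] {l : List B} (hl : l.Nodup) {x : B → ℝ} (hx : SuppIn l x) :
    ∃ y, geom cs (cs.wordProd l) y - y = x := by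
  have hmaps : ∀ y ∈ suppSpace l,
      (geom cs (cs.wordProd l) - 1 : Module.End ℝ (B → ℝ)) y ∈ suppSpace l := fun y hy =>
    Submodule.sub_mem _ (geom_wordProd_supp cs hy) hy
  have hinj : Function.Injective ((geom cs (cs.wordProd l) - 1 : Module.End ℝ (B → ℝ)).restrict hmaps) := by
    rw [← LinearMap.ker_eq_bot, LinearMap.ker_eq_bot']
    rintro ⟨y, hy⟩ h
    have h1 : geom cs (cs.wordProd l) y - y = 0 := congrArg Subtype.val h
    exact Subtype.ext (eq_zero_of_fixed cs hl hy (sub_eq_zero.mp h1))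
  obtain ⟨y, hy⟩ := LinearMap.injective_iff_surjective.mp hinj ⟨x, hx⟩
  exact ⟨y, congrArg Subtype.val hy⟩

open Classical in
/-- The positive root of a reflection (and `0` for other elements). -/
noncomputable def rootOf (t : W) : B → ℝ := if h : ∃ β, HasRoot cs t β then h.choose else 0

lemma rootOf_eq {t : W} {β : B → ℝ} (h : HasRoot cs t β) : rootOf cs t = β := by
  have h' : ∃ β, HasRoot cs t β := ⟨β, h⟩
  rw [rootOf, dif_pos h']
  exact h'.choose_spec.unique h

/-- The moved space of a product of reflections is contained in the span of their roots. -/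
lemma moved_mem_span {ts : List W} (hts : ∀ t ∈ ts, cs.IsReflection t) (x : B → ℝ) :
    geom cs ts.prod x - x ∈ Submodule.span ℝ {β | β ∈ ts.map (rootOf cs)} := by
  induction ts with
  | nil => simp
  | cons t ts ih =>
    simp only [List.mem_cons, forall_eq_or_imp] at hts
    obtain ⟨β, hβ⟩ := exists_hasRoot hts.1
    have h1 : geom cs (t :: ts).prod x - x = (geom cs ts.prod x - x) +
        (-(2 * bil M β (geom cs ts.prod x))) • β := by
      rw [List.prod_cons, geom_mul_apply, hβ.2.2]; module
    rw [h1]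
    refine Submodule.add_mem _ (Submodule.span_mono ?_ (ih hts.2)) (Submodule.smul_mem _ _
      (Submodule.subset_span ?_))
    · intro z hz
      simp only [Set.mem_ofPred_eq, List.map_cons, List.mem_cons] at hz ⊢
      exact Or.inr hz
    · simp [rootOf_eq cs hβ]

lemma suppSpace_le_span [Finite W] {l : List B} (hl : l.Nodup) {ts : List W}
    (hts : ∀ t ∈ ts, cs.IsReflection t) (hprod : ts.prod = cs.wordProd l) :
    suppSpace l ≤ Submodule.span ℝ {β | β ∈ ts.map (rootOf cs)} := by
  intro x hx
  obtain ⟨y, rfl⟩ := exists_moved cs hl hx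
  rw [← hprod]
  exact moved_mem_span cs hts y

lemma finrank_span_roots_le (ts : List W) :
    Module.finrank ℝ (Submodule.span ℝ {β | β ∈ ts.map (rootOf cs)}) ≤ ts.length := by
  classical
  have h1 : {β | β ∈ ts.map (rootOf cs)} = ((ts.map (rootOf cs)).toFinset : Set (B → ℝ)) := by
    ext; simp
  rw [h1]
  refine (finrank_span_finset_le_card _).trans ((List.toFinset_card_le _).trans ?_)
  simp

lemma length_le_of_prod_eq [Finite W] {l : List B} (hl : l.Nodup) {ts : List W}
    (hts : ∀ t ∈ ts, cs.IsReflection t) (hprod : ts.prod = cs.wordProd l) :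
    l.length ≤ ts.length := by
  rw [← finrank_suppSpace hl]
  exact (Submodule.finrank_mono (suppSpace_le_span cs hl hts hprod)).trans
    (finrank_span_roots_le cs ts)

/-- The reflections in a minimal factorization of a parabolic Coxeter element lie in the
parabolic subgroup. -/
lemma supp_of_prod_eq [Finite W] {l : List B} (hl : l.Nodup) {ts : List W}
    (hts : ∀ t ∈ ts, cs.IsReflection t) (hprod : ts.prod = cs.wordProd l)
    (hlen : ts.length = l.length) {t : W} (ht : t ∈ ts) {β : B → ℝ} (hβ : HasRoot cs t β) :
    SuppIn l β := by
  have h1 := suppSpace_le_span cs hl hts hprod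
  have h2 := Submodule.eq_of_le_of_finrank_le h1
    (by rw [finrank_suppSpace hl, ← hlen]; exact finrank_span_roots_le cs ts)
  rw [← mem_suppSpace, h2]
  refine Submodule.subset_span ?_
  rw [← rootOf_eq cs hβ]
  exact List.mem_map_of_mem ht

variable (M) in
/-- `Hit l β`: rotating the word `l = s :: l'` to `l' ++ [s]` while applying `s` to `β`, one
eventually meets the situation where `β` is the first simple root of the word. -/
inductive Hit : List B → (B → ℝ) → Prop
  | head (s : B) (l : List B) : Hit (s :: l) (sroot s)
  | rot (s : B) (l : List B) (β : B → ℝ) : Hit (l ++ [s]) (srefl M s β) → Hit (s :: l) β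

lemma not_hit_rotate (p q : List B) {β : B → ℝ} (hβ : IsRoot cs β) (h0 : 0 ≤ β)
    (h : ¬ Hit M (p ++ q) β) :
    0 ≤ geom cs (cs.wordProd p)⁻¹ β ∧ ¬ Hit M (q ++ p) (geom cs (cs.wordProd p)⁻¹ β) := by
  induction p generalizing q β with
  | nil => simpa using ⟨h0, h⟩
  | cons s p ih =>
    have hne : β ≠ sroot s := by rintro rfl; exact h (Hit.head _ _)
    have h1 := ih (q ++ [s]) (hβ.srefl s) (hβ.srefl_nonneg h0 hne)
      (fun hc => h (Hit.rot _ _ _ (by simpa using hc)))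
    simpa [wordProd_cons, geom_mul_apply] using h1

/-- Every positive root of the parabolic subgroup is met by the rotation process: otherwise its
orbit under the Coxeter element would consist of positive roots, with nonzero fixed sum. -/
lemma hit_of_root [Finite W] {l : List B} (hl : l.Nodup) {β : B → ℝ} (hβ : IsRoot cs β)
    (h0 : 0 ≤ β) (hsupp : SuppIn l β) : Hit M l β := by
  by_contra hc
  set c := (cs.wordProd l)⁻¹ with hcdef
  have hall : ∀ k : ℕ, 0 ≤ geom cs (c ^ k) β ∧ ¬ Hit M l (geom cs (c ^ k) β) ∧
      SuppIn l (geom cs (c ^ k) β) := by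
    intro k
    induction k with
    | zero => simpa using ⟨h0, hc, hsupp⟩
    | succ k ih =>
      have h1 := not_hit_rotate cs l [] (hβ.geom (c ^ k)) ih.1 (by simpa using ih.2.1)
      rw [List.nil_append, ← hcdef, ← geom_mul_apply, ← pow_succ'] at h1
      refine ⟨h1.1, h1.2, ?_⟩
      have h2 := ih.2.2
      intro j hj
      have h3 := geom_wordProd_coord cs l (geom cs (c ^ (k + 1)) β) hj
      rw [← h3, ← geom_mul_apply, pow_succ', hcdef, mul_inv_cancel_left]
      exact h2 j hj
  set n := orderOf c
  have hn : 0 < n := orderOf_pos c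
  set y := ∑ k ∈ Finset.range n, geom cs (c ^ k) β with hy
  have hcy : geom cs c y = y := by
    rw [hy, map_sum]
    simp only [← geom_mul_apply, ← pow_succ']
    have h1 := Finset.sum_range_succ (fun k => geom cs (c ^ k) β) n
    rw [Finset.sum_range_succ' (fun k => geom cs (c ^ k) β) n] at h1
    rw [pow_zero, pow_orderOf_eq_one] at h1
    exact add_right_cancel h1
  have hfix : geom cs (cs.wordProd l) y = y := by
    conv_lhs => rw [← hcy]
    rw [hcdef, geom_apply_inv]
  have hy0 : y = 0 := by
    refine eq_zero_of_fixed cs hl (fun j hj => ?_) hfix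
    rw [hy, Finset.sum_apply]
    exact Finset.sum_eq_zero fun k _ => (hall k).2.2 j hj
  have hle : β ≤ y := by
    have := Finset.single_le_sum (f := fun k => geom cs (c ^ k) β) (fun k _ => (hall k).1)
      (Finset.mem_range.mpr hn)
    simpa [hy] using this
  exact hβ.not_both h0 (hy0 ▸ hle)

lemma prod_map_conj {G : Type*} [Group G] (a : G) (f : W → G) (ts : List W) :
    (ts.map fun t => a⁻¹ * f t * a).prod = a⁻¹ * (ts.map f).prod * a := by
  induction ts with
  | nil => simp
  | cons t ts ih => simp only [List.map_cons, List.prod_cons, ih]; group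

/-- The product of the lifts of the reflections in any minimal factorization of a parabolic
Coxeter element is the corresponding product of standard generators. -/
theorem prod_phi [Finite W] {l : List B} (hl : l.Nodup) {ts : List W}
    (hts : ∀ t ∈ ts, cs.IsReflection t) (hlen : ts.length = l.length)
    (hprod : ts.prod = cs.wordProd l) : (ts.map (phi cs l)).prod = aprod M l := by
  induction hn : l.length generalizing l ts with
  | zero =>
    rw [List.eq_nil_of_length_eq_zero hn]
    rw [hn] at hlen
    rw [List.eq_nil_of_length_eq_zero hlen]
    simp
  | succ n ih =>
    -- The case where the first reflection is the first simple reflection of the word.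
    have hhead : ∀ (s : B) (l : List B) (ts : List W), (s :: l).Nodup → l.length = n →
        (∀ t ∈ ts, cs.IsReflection t) → ts.length = n →
        (cs.simple s :: ts).prod = cs.wordProd (s :: l) →
        ((cs.simple s :: ts).map (phi cs (s :: l))).prod = aprod M (s :: l) := by
      intro s l ts hl hln hts hlen hprod
      obtain ⟨hs, hl'⟩ := List.nodup_cons.mp hl
      rw [List.prod_cons, wordProd_cons] at hprod
      have hprod' := mul_left_cancel hprod
      rw [List.map_cons, List.prod_cons, phi_simple, aprod_cons,
        ← ih hl' hts (by omega) hprod' hln]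
      congr 2
      refine List.map_congr_left fun t ht => ?_
      obtain ⟨β, hβ⟩ := exists_hasRoot (hts t ht)
      exact phi_cons hs hβ (supp_of_prod_eq cs hl' hts hprod' (by omega) ht hβ)
    have main : ∀ (l : List B) (β : B → ℝ), Hit M l β → ∀ (t : W) (ts : List W), l.Nodup →
        l.length = n + 1 → HasRoot cs t β → (∀ t' ∈ t :: ts, cs.IsReflection t') →
        (t :: ts).length = n + 1 → (t :: ts).prod = cs.wordProd l →
        ((t :: ts).map (phi cs l)).prod = aprod M l := by
      intro l β hhit
      induction hhit with
      | head s l =>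
        intro t ts hl hln hβ hts hlen hprod
        obtain rfl := hβ.eq_of_root (hasRoot_simple s)
        exact hhead s l ts hl (by simpa using hln) (fun t ht => hts t (List.mem_cons_of_mem _ ht))
          (by simpa using hlen) hprod
      | rot s l β _ ih2 =>
        intro t ts hl hln hβ hts hlen hprod
        by_cases hne : β = sroot s
        · subst hne
          obtain rfl := hβ.eq_of_root (hasRoot_simple s)
          exact hhead s l ts hl (by simpa using hln) (fun t ht => hts t (List.mem_cons_of_mem _ ht))
            (by simpa using hlen) hprod
        have hβ' : HasRoot cs (cs.simple s * t * cs.simple s) (srefl M s β) := by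
          have := hβ.conj (cs.simple s) (by simpa using hβ.1.srefl_nonneg hβ.2.1 hne)
          simpa using this
        have hconj : ∀ ts : List W, (ts.map fun t => cs.simple s * t * cs.simple s).prod =
            cs.simple s * ts.prod * cs.simple s := by
          intro ts
          have := prod_map_conj (cs.simple s) (fun t : W => t) ts
          simpa using this
        have h1 := ih2 (cs.simple s * t * cs.simple s)
          (ts.map fun t => cs.simple s * t * cs.simple s)
          (by rw [List.nodup_append_comm]; simpa using hl) (by simpa using hln) hβ'
          (by
            rw [← List.map_cons (f := fun t => cs.simple s * t * cs.simple s)]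
            intro t' ht'
            obtain ⟨t'', ht'', rfl⟩ := List.mem_map.mp ht'
            have := (hts t'' ht'').conj (cs.simple s)
            simpa using this)
          (by simpa using hlen)
          (by
            rw [← List.map_cons (f := fun t => cs.simple s * t * cs.simple s), hconj, hprod,
              wordProd_append, wordProd_cons]
            simp)
        rw [← List.map_cons (f := fun t => cs.simple s * t * cs.simple s), List.map_map] at h1
        have h2 : (t :: ts).map (phi cs (l ++ [s]) ∘ fun t => cs.simple s * t * cs.simple s) =
            (t :: ts).map fun t => (agen M s)⁻¹ * phi cs (s :: l) t * agen M s := by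
          refine List.map_congr_left fun t' ht' => ?_
          obtain ⟨β', hβ'⟩ := exists_hasRoot (hts t' ht')
          exact phi_rotate hl hβ' (supp_of_prod_eq cs hl hts hprod (by omega) ht' hβ')
        rw [h2, prod_map_conj, aprod_append, aprod_cons, aprod_nil, mul_one] at h1
        rw [aprod_cons, ← mul_right_cancel h1]
        group
    cases ts with
    | nil => simp at hlen; omega
    | cons t ts =>
      obtain ⟨β, hβ⟩ := exists_hasRoot (hts t List.mem_cons_self)
      exact main l β (hit_of_root cs hl hβ.1 hβ.2.1
        (supp_of_prod_eq cs hl hts hprod hlen List.mem_cons_self hβ)) t ts hl hn hβ hts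
        (by omega) hprod

end Factorizations

end DualBraid

namespace DualBraid

open CoxeterSystem

section ReflectionLength

variable (cs : CoxeterSystem M W)

/-! ### Reflection length -/

lemma exists_rlen (w : W) :
    ∃ ts : List W, (∀ t ∈ ts, cs.IsReflection t) ∧ ts.length = rlen cs w ∧ ts.prod = w := by
  refine Nat.sInf_mem (s := {k | ∃ l : List W, (∀ t ∈ l, cs.IsReflection t) ∧ l.length = k ∧
    l.prod = w}) ?_
  obtain ⟨l, -, rfl⟩ := cs.exists_isReduced w
  refine ⟨_, l.map cs.simple, fun t ht => ?_, rfl, rfl⟩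
  obtain ⟨i, -, rfl⟩ := List.mem_map.mp ht
  exact cs.isReflection_simple i

lemma rlen_le {ts : List W} (hts : ∀ t ∈ ts, cs.IsReflection t) : rlen cs ts.prod ≤ ts.length :=
  Nat.sInf_le ⟨ts, hts, rfl, rfl⟩

lemma rlen_mul_le (u v : W) : rlen cs (u * v) ≤ rlen cs u + rlen cs v := by
  obtain ⟨ts, h1, h2, rfl⟩ := exists_rlen cs u
  obtain ⟨ts', h1', h2', rfl⟩ := exists_rlen cs v
  rw [← h2, ← h2', ← List.prod_append, ← List.length_append]
  refine rlen_le cs fun t ht => ?_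
  rcases List.mem_append.mp ht with h | h
  · exact h1 t h
  · exact h1' t h

lemma rlen_one : rlen cs 1 = 0 := by
  have := rlen_le cs (ts := []) (by simp)
  simpa using this

lemma rlen_eq_zero {w : W} (h : rlen cs w = 0) : w = 1 := by
  obtain ⟨ts, -, h2, rfl⟩ := exists_rlen cs w
  rw [h] at h2
  rw [List.eq_nil_of_length_eq_zero h2]; rfl

lemma rlen_conj_le (x w : W) : rlen cs (x * w * x⁻¹) ≤ rlen cs w := by
  obtain ⟨ts, h1, h2, rfl⟩ := exists_rlen cs w
  have h3 := prod_map_conj x⁻¹ (fun t : W => t) ts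
  simp only [inv_inv, List.map_id'] at h3
  rw [← h3, ← h2]
  refine (rlen_le cs fun t ht => ?_).trans (by simp)
  obtain ⟨t', ht', rfl⟩ := List.mem_map.mp ht
  exact (h1 t' ht').conj x

lemma rlen_conj (x w : W) : rlen cs (x * w * x⁻¹) = rlen cs w := by
  refine le_antisymm (rlen_conj_le cs x w) ?_
  have := rlen_conj_le cs x⁻¹ (x * w * x⁻¹)
  simpa [mul_assoc] using this

lemma rle_iff_le {w γ : W} : rle cs w γ ↔ rlen cs w + rlen cs (w⁻¹ * γ) ≤ rlen cs γ := by
  have := rlen_mul_le cs w (w⁻¹ * γ)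
  rw [mul_inv_cancel_left] at this
  unfold rle
  omega

lemma rle_conj {w γ : W} (x : W) (h : rle cs w γ) : rle cs (x * w * x⁻¹) (x * γ * x⁻¹) := by
  unfold rle at h ⊢
  have : (x * w * x⁻¹)⁻¹ * (x * γ * x⁻¹) = x * (w⁻¹ * γ) * x⁻¹ := by group
  rw [this, rlen_conj, rlen_conj, rlen_conj, h]

lemma rle_left {u v γ : W} (h : rlen cs u + rlen cs v = rlen cs (u * v))
    (hγ : rle cs (u * v) γ) : rle cs u γ := by
  rw [rle_iff_le] at hγ ⊢
  have h1 := rlen_mul_le cs v ((u * v)⁻¹ * γ)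
  have h2 : v * ((u * v)⁻¹ * γ) = u⁻¹ * γ := by group
  rw [h2] at h1
  omega

lemma rle_right {u v γ : W} (h : rlen cs u + rlen cs v = rlen cs (u * v))
    (hγ : rle cs (u * v) γ) : rle cs v γ := by
  rw [rle_iff_le] at hγ ⊢
  have h1 := rlen_mul_le cs (v⁻¹ * u * v⁻¹⁻¹) ((u * v)⁻¹ * γ)
  have h2 : (v⁻¹ * u * v⁻¹⁻¹) * ((u * v)⁻¹ * γ) = v⁻¹ * γ := by group
  rw [h2, rlen_conj] at h1
  omega

variable [Fintype B] [DecidableEq B]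

lemma rlen_wordProd [Finite W] {l : List B} (hl : l.Nodup) :
    rlen cs (cs.wordProd l) = l.length := by
  apply le_antisymm
  · have := rlen_le cs (ts := l.map cs.simple) (by
      intro t ht
      obtain ⟨i, -, rfl⟩ := List.mem_map.mp ht
      exact cs.isReflection_simple i)
    simpa [wordProd] using this
  · obtain ⟨ts, h1, h2, h3⟩ := exists_rlen cs (cs.wordProd l)
    rw [← h2]
    exact length_le_of_prod_eq cs hl h1 h3

lemma rlen_reflection {t : W} (ht : cs.IsReflection t) : rlen cs t = 1 := by
  have h1 := rlen_le cs (ts := [t]) (by simpa using ht)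
  simp only [List.prod_cons, List.prod_nil, mul_one, List.length_singleton] at h1
  have h2 : rlen cs t ≠ 0 := by
    intro h
    obtain ⟨β, hβ⟩ := exists_hasRoot ht
    have h3 := hβ.geom_self
    rw [rlen_eq_zero cs h, geom_one_apply] at h3
    exact hβ.1.ne_zero (self_eq_neg.mp h3)
  omega

/-- Deleting letters from a word amounts to splitting off one reflection per deleted letter. -/
lemma exists_complement {l1 l : List B} (h : l1.Sublist l) :
    ∃ ts : List W, (∀ t ∈ ts, cs.IsReflection t) ∧ ts.length + l1.length = l.length ∧
      cs.wordProd l = cs.wordProd l1 * ts.prod := by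
  induction h with
  | slnil => exact ⟨[], by simp⟩
  | @cons l1 l a _ ih =>
    obtain ⟨ts, h1, h2, h3⟩ := ih
    refine ⟨((cs.wordProd l1)⁻¹ * cs.simple a * (cs.wordProd l1)⁻¹⁻¹) :: ts, ?_, ?_, ?_⟩
    · simp only [List.mem_cons, forall_eq_or_imp]
      exact ⟨(cs.isReflection_simple a).conj _, h1⟩
    · simp only [List.length_cons]; omega
    · rw [wordProd_cons, h3, List.prod_cons]; group
  | @cons_cons l1 l a _ ih =>
    obtain ⟨ts, h1, h2, h3⟩ := ih
    refine ⟨ts, h1, by simp only [List.length_cons]; omega, ?_⟩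
    rw [wordProd_cons, h3, wordProd_cons, mul_assoc]

lemma rle_of_sublist [Finite W] {l1 l : List B} (hl : l.Nodup) (h : l1.Sublist l) :
    rle cs (cs.wordProd l1) (cs.wordProd l) := by
  obtain ⟨ts, h1, h2, h3⟩ := exists_complement cs h
  rw [rle_iff_le, rlen_wordProd cs hl, rlen_wordProd cs (hl.sublist h), h3, inv_mul_cancel_left]
  have := rlen_le cs h1
  omega

end ReflectionLength

section PosetGroup

variable (cs : CoxeterSystem M W) (γ : W)

/-! ### Generators and relations of the poset group -/

open Classical in
/-- The generator `⟨w⟩` of the poset group, extended by `1` to all of `W`. -/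
noncomputable def ggen (w : W) : PosetGroup cs γ :=
  if h : w ≠ 1 ∧ rle cs w γ then PresentedGroup.of ⟨w, h⟩ else 1

lemma ggen_one : ggen cs γ 1 = 1 := by simp [ggen]

lemma ggen_of (w : NCGen cs γ) : ggen cs γ w = PresentedGroup.of w := by
  rw [ggen, dif_pos w.2]

lemma ggen_mul {u v : W} (h : rlen cs u + rlen cs v = rlen cs (u * v)) (hγ : rle cs (u * v) γ) :
    ggen cs γ u * ggen cs γ v = ggen cs γ (u * v) := by
  by_cases hu : u = 1
  · subst hu; simp [ggen_one]
  by_cases hv : v = 1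
  · subst hv; simp [ggen_one]
  have huv : u * v ≠ 1 := by
    intro h'
    rw [h', rlen_one] at h
    exact hu (rlen_eq_zero cs (by omega))
  rw [ggen, dif_pos ⟨hu, rle_left cs h hγ⟩, ggen, dif_pos ⟨hv, rle_right cs h hγ⟩, ggen,
    dif_pos ⟨huv, hγ⟩, ← mul_inv_eq_one]
  exact (QuotientGroup.eq_one_iff _).mpr (Subgroup.subset_normalClosure
    ⟨⟨u, hu, rle_left cs h hγ⟩, ⟨v, hv, rle_right cs h hγ⟩, ⟨u * v, huv, hγ⟩, rfl, rfl, h⟩)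

lemma ggen_prod (ts : List W) (hts : ∀ t ∈ ts, cs.IsReflection t)
    (h : rlen cs ts.prod = ts.length) (hγ : rle cs ts.prod γ) :
    ggen cs γ ts.prod = (ts.map (ggen cs γ)).prod := by
  induction ts with
  | nil => simp [ggen_one]
  | cons t ts ih =>
    simp only [List.mem_cons, forall_eq_or_imp] at hts
    rw [List.prod_cons, List.length_cons] at h
    rw [List.prod_cons] at hγ
    have h1 := rlen_mul_le cs t ts.prod
    have h2 := rlen_le cs hts.2
    have h3 := rlen_le cs (ts := [t]) (by simpa using hts.1)
    simp only [List.prod_cons, List.prod_nil, mul_one, List.length_singleton] at h3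
    have h4 : rlen cs t + rlen cs ts.prod = rlen cs (t * ts.prod) := by omega
    rw [List.prod_cons, List.map_cons, List.prod_cons, ← ggen_mul cs γ h4 hγ,
      ih hts.2 (by omega) (rle_right cs h4 hγ)]

lemma prod_alternatingWord {G : Type*} [Group G] (f : B → G) (i j : B) (p : ℕ) :
    ((alternatingWord i j (2 * p)).map f).prod = (f i * f j) ^ p ∧
    ((alternatingWord i j (2 * p + 1)).map f).prod = f j * (f i * f j) ^ p := by
  have h2 : ∀ p, ((alternatingWord i j (2 * p)).map f).prod = (f i * f j) ^ p →
      ((alternatingWord i j (2 * p + 1)).map f).prod = f j * (f i * f j) ^ p := by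
    intro p h
    rw [alternatingWord_succ', if_pos (by simp), List.map_cons, List.prod_cons, h]
  have h1 : ((alternatingWord i j (2 * p)).map f).prod = (f i * f j) ^ p := by
    induction p with
    | zero => simp [alternatingWord]
    | succ p ih =>
      rw [show 2 * (p + 1) = (2 * p + 1) + 1 by ring, alternatingWord_succ',
        if_neg (by simp), List.map_cons, List.prod_cons, h2 p ih, pow_succ',
        mul_assoc]
  exact ⟨h1, h2 p h1⟩

/-- A sequence with constant consecutive products and period `m` gives a braid relation. -/
lemma braid_of_seq {G : Type*} [Group G] (f : B → G) (i j : B) (m : ℕ) (x : ℕ → G)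
    (h0 : x 0 = f i) (h1 : x 1 = f j) (hx : ∀ k, x k * x (k + 1) = f i * f j)
    (hm : x m = f i) :
    ((alternatingWord i j m).map f).prod = ((alternatingWord j i m).map f).prod := by
  set C := f i * f j with hC
  have hstep : ∀ k, x (k + 2) = C⁻¹ * x k * C := by
    intro k
    have e1 : x (k + 1) = (x k)⁻¹ * C := by rw [← hx k]; group
    have e2 : x (k + 2) = (x (k + 1))⁻¹ * C := by rw [← hx (k + 1)]; group
    rw [e2, e1]; group
  have hpow : ∀ k p, x (2 * p + k) = (C ^ p)⁻¹ * x k * C ^ p := by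
    intro k p
    induction p with
    | zero => simp
    | succ p ih =>
      rw [show 2 * (p + 1) + k = (2 * p + k) + 2 by ring, hstep, ih, pow_succ]; group
  have hconj : ∀ p, (f j * f i) ^ p = (f i)⁻¹ * C ^ p * f i := by
    intro p
    have : f j * f i = (f i)⁻¹ * C * (f i)⁻¹⁻¹ := by rw [hC]; group
    rw [this, conj_pow, inv_inv]
  obtain ⟨p, rfl | rfl⟩ : ∃ p, m = 2 * p ∨ m = 2 * p + 1 := ⟨m / 2, by omega⟩
  · have h := hpow 0 p
    rw [add_zero, hm, h0, mul_assoc, eq_inv_mul_iff_mul_eq] at h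
    rw [(prod_alternatingWord f i j p).1, (prod_alternatingWord f j i p).1, hconj, mul_assoc, h,
      inv_mul_cancel_left]
  · have h := hpow 1 p
    rw [hm, h1, mul_assoc, eq_inv_mul_iff_mul_eq] at h
    rw [(prod_alternatingWord f i j p).2, (prod_alternatingWord f j i p).2, hconj, ← h]
    group

lemma pair_sublist {l : List B} {i j : B} (hij : i ≠ j) (hi : i ∈ l) (hj : j ∈ l) :
    [i, j].Sublist l ∨ [j, i].Sublist l := by
  induction l with
  | nil => simp at hi
  | cons a l ih =>
    rcases List.mem_cons.mp hi with rfl | hi'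
    · have hj' := (List.mem_cons.mp hj).resolve_left hij.symm
      exact Or.inl ((List.singleton_sublist.mpr hj').cons_cons _)
    · rcases List.mem_cons.mp hj with rfl | hj'
      · exact Or.inr ((List.singleton_sublist.mpr hi').cons_cons _)
      · exact (ih hi' hj').imp (fun h => h.cons _) (fun h => h.cons _)

variable [Fintype B] [DecidableEq B]

/-- The dual braid relations in the rank two interval below `s_i s_j ≤ γ` imply the braid
relation. -/
lemma ggen_braid [Finite W] {i j : B} (hij : i ≠ j)
    (hc : rle cs (cs.simple i * cs.simple j) γ) :
    ((alternatingWord i j (M i j)).map fun i => ggen cs γ (cs.simple i)).prod =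
      ((alternatingWord j i (M i j)).map fun i => ggen cs γ (cs.simple i)).prod := by
  set c := cs.simple i * cs.simple j with hcdef
  have hlen : rlen cs c = 2 := by
    have := rlen_wordProd cs (l := [i, j]) (by simpa using hij)
    simpa [wordProd] using this
  have hflip : ∀ k, cs.simple i * c ^ k * cs.simple i = (c ^ k)⁻¹ := by
    intro k
    have h1 : cs.simple i * c * (cs.simple i)⁻¹ = c⁻¹ := by simp [hcdef]
    have h2 := conj_pow (i := k) (a := cs.simple i) (b := c)
    rw [h1, inv_simple, inv_pow] at h2
    exact h2.symm
  have hrefl : ∀ k, cs.IsReflection (cs.simple i * c ^ k) := by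
    intro k
    induction k using Nat.twoStepInduction with
    | zero => simpa using cs.isReflection_simple i
    | one => simpa [hcdef] using cs.isReflection_simple j
    | more k ih _ =>
      have h1 := ih.conj c⁻¹
      have h2 : c⁻¹ * (cs.simple i * c ^ k) * c⁻¹⁻¹ = cs.simple i * c ^ (k + 2) := by
        have h3 := hflip 1
        rw [pow_one] at h3
        have h4 : c⁻¹ * cs.simple i = cs.simple i * c := by
          rw [← h3, mul_assoc, simple_mul_simple_self, mul_one]
        rw [inv_inv, ← mul_assoc c⁻¹, h4, mul_assoc _ (c ^ k) c, ← pow_succ,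
          mul_assoc _ c, ← pow_succ']
      rwa [h2] at h1
  refine braid_of_seq _ i j (M i j) (fun k => ggen cs γ (cs.simple i * c ^ k)) (by simp)
    (by simp only [pow_one, hcdef, simple_mul_simple_cancel_left]) ?_ ?_
  · intro k
    have hmul : cs.simple i * c ^ k * (cs.simple i * c ^ (k + 1)) = c := by
      rw [← mul_assoc, hflip, pow_succ]; group
    rw [ggen_mul cs γ (by rw [hmul, hlen, rlen_reflection cs (hrefl _),
      rlen_reflection cs (hrefl _)]) (by rwa [hmul]), hmul, ggen_mul cs γ
      (by rw [← hcdef, hlen, rlen_reflection cs (cs.isReflection_simple i),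
        rlen_reflection cs (cs.isReflection_simple j)]) hc]
  · simp only [hcdef, simple_mul_simple_pow, mul_one]

variable {cs} {γ} in
/-- All the generators of the poset group indexed by reflections lie in any subgroup containing
the ones indexed by the simple reflections: conjugating along the rotation process only involves
rank two dual braid relations. -/
lemma ggen_mem_of_hit [Finite W] {R : Subgroup (PosetGroup cs γ)} {l : List B} {β : B → ℝ}
    (hhit : Hit M l β) : ∀ x t : W, l.Nodup → (∀ i, i ∈ l) → x * cs.wordProd l * x⁻¹ = γ →
      (∀ i, ggen cs γ (x * cs.simple i * x⁻¹) ∈ R) → HasRoot cs t β →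
      ggen cs γ (x * t * x⁻¹) ∈ R := by
  induction hhit with
  | head s l =>
    intro x t hl hall hx hR hβ
    obtain rfl := hβ.eq_of_root (hasRoot_simple s)
    exact hR s
  | rot s l β _ ih =>
    intro x t hl hall hx hR hβ
    by_cases hne : β = sroot s
    · subst hne
      obtain rfl := hβ.eq_of_root (hasRoot_simple s)
      exact hR s
    have hβ' : HasRoot cs (cs.simple s * t * cs.simple s) (srefl M s β) := by
      have := hβ.conj (cs.simple s) (by simpa using hβ.1.srefl_nonneg hβ.2.1 hne)
      simpa using this
    have h1 := ih (x * cs.simple s) (cs.simple s * t * cs.simple s)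
      (by rw [List.nodup_append_comm]; simpa using hl)
      (fun i => by have := hall i; simpa [or_comm] using this)
      (by
        rw [← hx, wordProd_append, cs.wordProd_cons s l]
        simp [mul_assoc])
      (by
        intro i
        by_cases his : i = s
        · subst his; simpa [mul_assoc] using hR i
        have hsub : [s, i].Sublist (s :: l) :=
          (List.singleton_sublist.mpr ((List.mem_cons.mp (hall i)).resolve_left his)).cons_cons _
        have hle := rle_conj cs x (rle_of_sublist cs hl hsub)
        rw [hx] at hle
        have hlen : rlen cs (x * cs.wordProd [s, i] * x⁻¹) = 2 := by
          rw [rlen_conj, rlen_wordProd cs (hl.sublist hsub)]; rfl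
        have hword : cs.wordProd [s, i] = cs.simple s * cs.simple i := by simp [wordProd]
        rw [hword] at hle hlen
        have rs := fun y => (cs.isReflection_simple s).conj y
        have ri := fun y => (cs.isReflection_simple i).conj y
        have p1 : x * cs.simple s * x⁻¹ * (x * cs.simple i * x⁻¹) =
            x * (cs.simple s * cs.simple i) * x⁻¹ := by group
        have p2 : x * cs.simple s * cs.simple i * (x * cs.simple s)⁻¹ * (x * cs.simple s * x⁻¹) =
            x * (cs.simple s * cs.simple i) * x⁻¹ := by group
        have e1 := ggen_mul cs γ (u := x * cs.simple s * x⁻¹) (v := x * cs.simple i * x⁻¹)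
          (by rw [p1, hlen, rlen_reflection cs (rs x), rlen_reflection cs (ri x)])
          (by rwa [p1])
        have e2 := ggen_mul cs γ (u := x * cs.simple s * cs.simple i * (x * cs.simple s)⁻¹)
          (v := x * cs.simple s * x⁻¹)
          (by rw [p2, hlen, rlen_reflection cs (rs x), rlen_reflection cs (ri _)])
          (by rwa [p2])
        rw [p1, ← p2, ← e2] at e1
        rw [← mul_inv_eq_iff_eq_mul.mpr e1]
        exact R.mul_mem (R.mul_mem (hR s) (hR i)) (R.inv_mem (hR s)))
      hβ'
    simpa [mul_assoc] using h1

/-- The product of the lifts `φ_l` along a reduced reflection factorization of an element of the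
interval `[1, γ]`, `γ = wordProd l`, does not depend on the factorization. -/
lemma prod_phi_congr [Finite W] {l : List B} (hl : l.Nodup) {ts ts' : List W}
    (h1 : ∀ t ∈ ts, cs.IsReflection t) (h1' : ∀ t ∈ ts', cs.IsReflection t)
    (hlen : ts.length = rlen cs ts.prod) (hlen' : ts'.length = rlen cs ts.prod)
    (hprod : ts'.prod = ts.prod) (hle : rle cs ts.prod (cs.wordProd l)) :
    (ts.map (phi cs l)).prod = (ts'.map (phi cs l)).prod := by
  obtain ⟨us, h2, h3, h4⟩ := exists_rlen cs (ts.prod⁻¹ * cs.wordProd l)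
  have hlw := rlen_wordProd cs hl
  unfold rle at hle
  have key : ∀ vs : List W, (∀ t ∈ vs, cs.IsReflection t) → vs.length = rlen cs ts.prod →
      vs.prod = ts.prod → (vs.map (phi cs l)).prod * (us.map (phi cs l)).prod = aprod M l := by
    intro vs hvs hvl hvp
    rw [← List.prod_append, ← List.map_append]
    refine prod_phi cs hl ?_ ?_ ?_
    · intro t ht
      rcases List.mem_append.mp ht with h | h
      · exact hvs t h
      · exact h2 t h
    · rw [List.length_append]; omega
    · rw [List.prod_append, h4, hvp, mul_inv_cancel_left]
  exact mul_right_cancel ((key ts h1 hlen rfl).trans (key ts' h1' hlen' hprod).symm)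

/-- The theorem for the Coxeter element given by an ordering of the simple reflections. -/
theorem iso_of_wordProd [Finite W] {l : List B} (hl : l.Nodup) (hall : ∀ i, i ∈ l)
    (hγ : γ = cs.wordProd l) : Nonempty (PosetGroup cs γ ≃* ArtinGroup M) := by
  -- The homomorphism `θ : Γ → A`, and the homomorphism `ψ : A → Γ`.
  have hθ : ∀ r ∈ posetGroupRels cs γ, FreeGroup.lift (fun w : NCGen cs γ =>
      ((exists_rlen cs (w : W)).choose.map (phi cs l)).prod) r = 1 := by
    rintro _ ⟨w₁, w₂, w₃, rfl, hmul, hlen⟩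
    simp only [map_mul, map_inv, FreeGroup.lift_apply_of]
    rw [mul_inv_eq_one, ← List.prod_append, ← List.map_append]
    obtain ⟨a1, a2, a3⟩ := (exists_rlen cs (w₁ : W)).choose_spec
    obtain ⟨b1, b2, b3⟩ := (exists_rlen cs (w₂ : W)).choose_spec
    obtain ⟨c1, c2, c3⟩ := (exists_rlen cs (w₃ : W)).choose_spec
    have hp : ((exists_rlen cs (w₁ : W)).choose ++ (exists_rlen cs (w₂ : W)).choose).prod = w₃ := by
      rw [List.prod_append, a3, b3, hmul]
    refine prod_phi_congr cs hl ?_ c1 ?_ ?_ ?_ ?_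
    · intro t ht
      rcases List.mem_append.mp ht with h | h
      · exact a1 t h
      · exact b1 t h
    · rw [hp, List.length_append, a2, b2, hlen]
    · rw [hp, c2]
    · rw [hp, c3]
    · rw [hp, ← hγ]; exact w₃.2.2
  have hψ : ∀ r ∈ artinRels M, FreeGroup.lift (fun i => ggen cs γ (cs.simple i)) r = 1 := by
    rintro _ ⟨i, j, hij, hM, rfl⟩
    simp only [map_mul, map_inv, map_list_prod, List.map_map]
    rw [mul_inv_eq_one]
    have e : (FreeGroup.lift fun i => ggen cs γ (cs.simple i)) ∘ FreeGroup.of =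
        fun i => ggen cs γ (cs.simple i) := by
      ext i; simp
    simp only [e]
    rcases pair_sublist hij (hall i) (hall j) with h | h
    · refine ggen_braid cs γ hij ?_
      have := rle_of_sublist cs hl h
      rw [hγ]
      simpa [wordProd] using this
    · have := ggen_braid cs γ hij.symm (by
        have := rle_of_sublist cs hl h
        rw [hγ]
        simpa [wordProd] using this)
      rw [M.symmetric j i] at this
      exact this.symm
  set θ : PosetGroup cs γ →* ArtinGroup M := PresentedGroup.toGroup hθ with hθdef
  set ψ : ArtinGroup M →* PosetGroup cs γ := PresentedGroup.toGroup hψ with hψdef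
  have hψi : ∀ i, ψ (agen M i) = ggen cs γ (cs.simple i) := fun i =>
    PresentedGroup.toGroup.of hψ
  have hle : ∀ i, rle cs (cs.simple i) γ := by
    intro i
    have := rle_of_sublist cs hl (List.singleton_sublist.mpr (hall i))
    rw [hγ]
    simpa using this
  have hleft : θ.comp ψ = MonoidHom.id _ := by
    refine PresentedGroup.ext fun i => ?_
    change θ (ψ (agen M i)) = agen M i
    have hr := rlen_reflection cs (cs.isReflection_simple i)
    have hne : cs.simple i ≠ 1 := by
      intro h; rw [h, rlen_one] at hr; omega
    rw [hψi, ggen, dif_pos ⟨hne, hle i⟩, hθdef, PresentedGroup.toGroup.of]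
    obtain ⟨a1, a2, a3⟩ := (exists_rlen cs (cs.simple i)).choose_spec
    rw [← prod_phi_congr cs hl (ts := [cs.simple i]) (by simpa using cs.isReflection_simple i) a1
      (by simp [hr]) (by simpa using a2) (by simpa using a3) (by simpa [← hγ] using hle i)]
    simp [phi_simple]
  have hinj : Function.Injective ψ := fun x y h => by
    have hx := DFunLike.congr_fun hleft x
    have hy := DFunLike.congr_fun hleft y
    simp only [MonoidHom.comp_apply, MonoidHom.id_apply] at hx hy
    rw [← hx, ← hy, h]
  have hsurj : Function.Surjective ψ := by
    have hrefl : ∀ t, cs.IsReflection t → ggen cs γ t ∈ ψ.range := by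
      intro t ht
      obtain ⟨β, hβ⟩ := exists_hasRoot ht
      have := ggen_mem_of_hit (γ := γ) (R := ψ.range)
        (hit_of_root cs hl hβ.1 hβ.2.1 fun j hj => absurd (hall j) hj) 1 t hl hall
        (by simp [hγ]) (fun i => ⟨agen M i, by simp [hψi]⟩) hβ
      simpa using this
    rw [← MonoidHom.range_eq_top, eq_top_iff, ← PresentedGroup.closure_range_of,
      Subgroup.closure_le]
    rintro _ ⟨w, rfl⟩
    rw [← ggen_of]
    obtain ⟨ts, h1, h2, h3⟩ := exists_rlen cs (w : W)
    rw [← h3, ggen_prod cs γ ts h1 (by rw [h3, h2]) (by rw [h3]; exact w.2.2)]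
    refine Subgroup.list_prod_mem _ fun y hy => ?_
    obtain ⟨t, ht, rfl⟩ := List.mem_map.mp hy
    exact hrefl t (h1 t ht)
  exact ⟨(MulEquiv.ofBijective ψ ⟨hinj, hsurj⟩).symm⟩

lemma rlen_map_conj (v : W) : rlen (cs.map (MulAut.conj v)) = rlen cs := by
  have h : ∀ t, (cs.map (MulAut.conj v)).IsReflection t ↔ cs.IsReflection t := by
    intro t
    constructor
    · rintro ⟨w, i, rfl⟩
      exact ⟨w * v, i, by simp [mul_assoc]⟩
    · rintro ⟨w, i, rfl⟩
      exact ⟨w * v⁻¹, i, by simp [mul_assoc]⟩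
  funext w
  simp only [rlen, h]

/-- The poset group depends on the Coxeter system only through the reflection length. -/
lemma posetGroup_congr (cs' : CoxeterSystem M W) (h : rlen cs' = rlen cs)
    (hiso : Nonempty (PosetGroup cs' γ ≃* ArtinGroup M)) :
    Nonempty (PosetGroup cs γ ≃* ArtinGroup M) := by
  have key : ∀ r r' : W → ℕ, r' = r →
      Nonempty (PresentedGroup {x : FreeGroup {w : W // w ≠ 1 ∧ r' γ = r' w + r' (w⁻¹ * γ)} |
        ∃ w₁ w₂ w₃ : {w : W // w ≠ 1 ∧ r' γ = r' w + r' (w⁻¹ * γ)},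
          x = FreeGroup.of w₁ * FreeGroup.of w₂ * (FreeGroup.of w₃)⁻¹ ∧
          (w₁ : W) * (w₂ : W) = (w₃ : W) ∧ r' (w₁ : W) + r' (w₂ : W) = r' (w₃ : W)}
        ≃* ArtinGroup M) →
      Nonempty (PresentedGroup {x : FreeGroup {w : W // w ≠ 1 ∧ r γ = r w + r (w⁻¹ * γ)} |
        ∃ w₁ w₂ w₃ : {w : W // w ≠ 1 ∧ r γ = r w + r (w⁻¹ * γ)},
          x = FreeGroup.of w₁ * FreeGroup.of w₂ * (FreeGroup.of w₃)⁻¹ ∧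
          (w₁ : W) * (w₂ : W) = (w₃ : W) ∧ r (w₁ : W) + r (w₂ : W) = r (w₃ : W)}
        ≃* ArtinGroup M) := by
    rintro r _ rfl h
    exact h
  exact key _ _ h hiso

end PosetGroup

end DualBraid

/-- Bessis: the poset group `Γ(W,γ)` is isomorphic to the Artin group `A(W,S)`. -/
theorem posetGroup_iso_artinGroup [Fintype B] [Fintype W] (cs : CoxeterSystem M W) (γ : W)
    (hγ : IsCoxeterElement cs γ) :
    Nonempty (PosetGroup cs γ ≃* ArtinGroup M) := by
  classical
  obtain ⟨v, l, hl, hall, rfl⟩ := hγ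
  -- Conjugation by `v` reduces to the case where the Coxeter element is a product of simple
  -- reflections, without changing the reflection length.
  refine DualBraid.posetGroup_congr cs _ (cs.map (MulAut.conj v))
    (DualBraid.rlen_map_conj cs v) ?_
  refine DualBraid.iso_of_wordProd _ _ hl hall ?_
  have h : ∀ l : List B, v * cs.wordProd l * v⁻¹ =
      (cs.map (MulAut.conj v)).wordProd l := by
    intro l
    induction l with
    | nil => simp
    | cons i l ih =>
      rw [CoxeterSystem.wordProd_cons, CoxeterSystem.wordProd_cons, ← ih]
      simp [mul_assoc]
  exact h l
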